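/- arXiv:2001.01224 — 9 statements merged into one kernel-verified Lean document; each statement's English description precedes it below -/
import Mathlib

section
/- Let H be a real Hilbert space and A : H → H a bounded linear operator that is compact and self-adjoint. Suppose u ∈ H with ‖u‖ = 1 and μ, β ∈ ℝ with β ≥ 0 satisfy ‖Au − μ u‖ ≤ β. Then for every d₀ > β there exists ũ ∈ H with ‖ũ‖ = 1 and ‖u − ũ‖ ≤ 2 d₀⁻¹ β, such that ũ belongs to the closure of the linear span of all eigenvectors of A whose eigenvalues lie in the interval [μ − d₀, μ + d₀]. -/
open RealInnerProductSpace

/-- Vishik–Lyusternik lemma, second assertion: the normalized approximate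
eigenvector `u` is `2 d₀⁻¹ β`-close to a normalized element of the closed span of
the eigenvectors of the compact self-adjoint operator `A` whose eigenvalues lie in
the segment `[μ - d₀, μ + d₀]`. -/
theorem vishik_eigenvector_approximation
    {H : Type*} [NormedAddCommGroup H] [InnerProductSpace ℝ H] [CompleteSpace H]
    (A : H →L[ℝ] H)
    (hcompact : IsCompactOperator (⇑A))
    (hsa : ∀ x y : H, ⟪A x, y⟫ = ⟪x, A y⟫)
    (u : H) (hu : ‖u‖ = 1)
    (μ β : ℝ) (hβ0 : 0 ≤ β)
    (happrox : ‖A u - μ • u‖ ≤ β)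
    (d₀ : ℝ) (hd₀ : β < d₀) :
    ∃ tu : H, ‖tu‖ = 1 ∧ ‖u - tu‖ ≤ 2 * d₀⁻¹ * β ∧
      tu ∈ closure (Submodule.span ℝ
        {v : H | v ≠ 0 ∧ ∃ t : ℝ, A v = t • v ∧ t ∈ Set.Icc (μ - d₀) (μ + d₀)} : Set H) := by
  set T : Module.End ℝ H := (A : H →ₗ[ℝ] H) with hT
  have hsym : T.IsSymmetric := fun x y => hsa x y
  have hd : 0 < d₀ := lt_of_le_of_lt hβ0 hd₀
  set S : Set H := {v : H | v ≠ 0 ∧ ∃ t : ℝ, A v = t • v ∧ t ∈ Set.Icc (μ - d₀) (μ + d₀)} with hS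
  set K : Submodule ℝ H := (Submodule.span ℝ S).topologicalClosure with hK
  have hKc : IsClosed (K : Set H) := Submodule.isClosed_topologicalClosure _
  haveI : CompleteSpace K := hKc.completeSpace_coe
  have hSK : S ⊆ K := fun x hx => Submodule.le_topologicalClosure _ (Submodule.subset_span hx)
  have hKle : ∀ M : Submodule ℝ H, IsClosed (M : Set H) → S ⊆ M → K ≤ M := fun M hM h =>
    Submodule.topologicalClosure_minimal _ (Submodule.span_le.2 h) hM
  have hKperp : ∀ x : H, (∀ y ∈ S, ⟪y, x⟫ = 0) → x ∈ Kᗮ := by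
    intro x hx
    have : K ≤ (Submodule.span ℝ {x})ᗮ := by
      apply hKle _ (Submodule.isClosed_orthogonal _)
      intro y hy
      rw [SetLike.mem_coe, Submodule.mem_orthogonal_singleton_iff_inner_left]
      exact hx y hy
    intro y hy
    exact Submodule.mem_orthogonal_singleton_iff_inner_left.1 (this hy)
  have hinv : ∀ x ∈ Kᗮ, A x - μ • x ∈ Kᗮ := by
    intro x hx
    apply hKperp
    intro y hy
    have h0 : ⟪y, x⟫ = 0 := hx y (hSK hy)
    obtain ⟨_, t, ht, _⟩ := hy
    rw [inner_sub_right, ← hsa, ht, real_inner_smul_left, real_inner_smul_right, h0]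
    simp
  let L : Submodule ℝ H := ⨆ t : {t : ℝ // t ∉ Set.Icc (μ - d₀) (μ + d₀)}, T.eigenspace t
  have hbot : (⨆ t, T.eigenspace t)ᗮ = ⊥ :=
    ContinuousLinearMap.orthogonalComplement_iSup_eigenspaces_eq_bot hcompact hsym
  have hKL : K ≤ Lᗮ := by
    apply hKle _ (Submodule.isClosed_orthogonal _)
    rintro y ⟨_, t, ht, htI⟩
    have : L ≤ (Submodule.span ℝ {y})ᗮ := by
      apply iSup_le
      rintro ⟨s, hs⟩ x hx
      rw [Submodule.mem_orthogonal_singleton_iff_inner_left]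
      have hne : s ≠ t := fun h => hs (h ▸ htI)
      have hx' : A x = s • x := Module.End.mem_eigenspace_iff.1 hx
      have := hsa x y
      rw [hx', ht, real_inner_smul_left, real_inner_smul_right] at this
      have h2 : (s - t) * ⟪x, y⟫ = 0 := by linarith
      exact (mul_eq_zero.1 h2).resolve_left (sub_ne_zero.2 hne)
    intro x hx
    exact Submodule.mem_orthogonal_singleton_iff_inner_left.1 (this hx)
  have hLK : Lᗮ ≤ K := by
    intro y hy
    obtain ⟨w, hw, z, hz, rfl⟩ := K.exists_add_mem_mem_orthogonal y
    have hzL : z ∈ Lᗮ := by simpa using Submodule.sub_mem _ hy (hKL hw)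
    have : z ∈ (⨆ t, T.eigenspace t)ᗮ := by
      have hle : (⨆ t, T.eigenspace t) ≤ (Submodule.span ℝ {z})ᗮ := by
        apply iSup_le
        intro t x hx
        rw [Submodule.mem_orthogonal_singleton_iff_inner_left]
        by_cases ht : t ∈ Set.Icc (μ - d₀) (μ + d₀)
        · by_cases hx0 : x = 0
          · simp [hx0]
          · exact hz x (hSK ⟨hx0, t, Module.End.mem_eigenspace_iff.1 hx, ht⟩)
        · exact hzL x (Submodule.mem_iSup_of_mem (⟨t, ht⟩ : {t : ℝ // t ∉ Set.Icc (μ - d₀) (μ + d₀)}) hx)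
      intro x hx
      exact Submodule.mem_orthogonal_singleton_iff_inner_left.1 (hle hx)
    rw [hbot, Submodule.mem_bot] at this
    simpa [this] using hw
  have hlowL : ∀ x ∈ L, d₀ * ‖x‖ ≤ ‖A x - μ • x‖ := by
    intro x hx
    obtain ⟨f, hf, rfl⟩ := (Submodule.mem_iSup_iff_exists_finsupp _ _).1 hx
    have hof := hsym.orthogonalFamily_eigenspaces
    have hof' := hof.comp (Subtype.val_injective (p := fun t : ℝ => t ∉ Set.Icc (μ - d₀) (μ + d₀)))
    have h1 := hof'.norm_sum (fun i => ⟨f i, hf i⟩) f.support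
    have h2 := hof'.norm_sum (fun i => (i.1 - μ) • ⟨f i, hf i⟩) f.support
    have h3 : A (f.sum fun _ x => x) - μ • (f.sum fun _ x => x)
        = ∑ i ∈ f.support, (i.1 - μ) • f i := by
      rw [Finsupp.sum, map_sum, Finset.smul_sum, ← Finset.sum_sub_distrib]
      refine Finset.sum_congr rfl fun i _ => ?_
      have : A (f i) = i.1 • f i := Module.End.mem_eigenspace_iff.1 (hf i)
      rw [this, sub_smul]
    rw [h3]
    simp only [Submodule.coe_norm, Submodule.coe_smul,
      Function.comp_def, Submodule.coe_subtypeₗᵢ, Submodule.subtype_apply] at h1 h2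
    apply le_of_sq_le_sq _ (norm_nonneg _)
    rw [mul_pow, Finsupp.sum, h1, h2, Finset.mul_sum]
    refine Finset.sum_le_sum fun i _ => ?_
    rw [norm_smul, mul_pow]
    gcongr
    rw [Real.norm_eq_abs]
    by_contra hc
    have := abs_lt.1 (not_le.1 hc)
    exact i.2 ⟨by linarith, by linarith⟩
  have hlow : ∀ x ∈ Kᗮ, d₀ * ‖x‖ ≤ ‖A x - μ • x‖ := by
    intro x hx
    have hxL : x ∈ L.topologicalClosure := by
      rw [← Submodule.orthogonal_orthogonal_eq_closure]
      exact Submodule.orthogonal_le hLK hx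
    have hcl : IsClosed {x : H | d₀ * ‖x‖ ≤ ‖A x - μ • x‖} :=
      isClosed_le (by fun_prop) (by fun_prop)
    exact closure_minimal hlowL hcl hxL
  obtain ⟨w, hw, v, hv, rfl⟩ := K.exists_add_mem_mem_orthogonal u
  have horth : ⟪A w - μ • w, A v - μ • v⟫ = 0 := by
    have h := hinv _ (hinv v hv) w hw
    rw [inner_sub_right, ← hsa, real_inner_smul_right] at h
    rw [inner_sub_left, real_inner_smul_left]
    exact h
  have hvle : d₀ * ‖v‖ ≤ β := by
    refine (hlow v hv).trans (le_trans ?_ happrox)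
    have e : A (w + v) - μ • (w + v) = (A w - μ • w) + (A v - μ • v) := by
      rw [map_add, smul_add]; abel
    have := norm_add_sq_eq_norm_sq_add_norm_sq_of_inner_eq_zero _ _ horth
    rw [e]
    nlinarith [norm_nonneg (A w - μ • w), norm_nonneg (A v - μ • v),
      norm_nonneg ((A w - μ • w) + (A v - μ • v))]
  have hv1 : ‖v‖ ≤ d₀⁻¹ * β := by
    rw [inv_mul_eq_div, le_div_iff₀ hd]; linarith
  have hvlt : ‖v‖ < 1 := by nlinarith
  have habs : |‖w‖ - 1| ≤ ‖v‖ := by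
    have := abs_norm_sub_norm_le w (w + v)
    rw [hu] at this
    simpa using this
  have hwpos : 0 < ‖w‖ := by linarith [(abs_le.1 habs).1]
  refine ⟨‖w‖⁻¹ • w, ?_, ?_, ?_⟩
  · rw [norm_smul, norm_inv, norm_norm, inv_mul_cancel₀ hwpos.ne']
  · have e : w + v - ‖w‖⁻¹ • w = v + (1 - ‖w‖⁻¹) • w := by rw [sub_smul, one_smul]; abel
    have e2 : ‖(1 - ‖w‖⁻¹) • w‖ = |‖w‖ - 1| := by
      rw [norm_smul, Real.norm_eq_abs, ← abs_of_pos hwpos, ← abs_mul, abs_of_pos hwpos, sub_mul,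
        inv_mul_cancel₀ hwpos.ne', one_mul]
    rw [e]
    have := norm_add_le v ((1 - ‖w‖⁻¹) • w)
    rw [e2] at this
    linarith
  · exact K.smul_mem _ hw
end

section
/- Let (μ, (w₁, w₂, w₃)) and (μ, (v₁, v₂, v₃)) be eigenpairs of the limit spectral problem on the star graph with the same eigenvalue μ, and suppose w₁(0) ≠ 0. Then there exists c ∈ ℝ such that v_i(x) = c · w_i(x) for all x ∈ [0, ℓ_i] and i = 1,2,3. In particular, every eigenvalue possessing an eigenfunction that does not vanish at the vertex is simple. -/
open Set

/-- An eigenpair `(μ, (w₁, w₂, w₃))` of the limit spectral problem on the star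
graph. -/
def IsLimitEigenpair (ℓ : Fin 3 → ℝ) (h : Fin 3 → ℝ → ℝ) (μ : ℝ)
    (w : Fin 3 → ℝ → ℝ) : Prop :=
  (∀ i, ContDiff ℝ 2 (w i)) ∧
  (∃ i, ∃ x ∈ Icc 0 (ℓ i), w i x ≠ 0) ∧
  (∀ i, ∀ x ∈ Icc 0 (ℓ i),
      deriv (fun t => (h i t) ^ 2 * deriv (w i) t) x = -μ * (h i x) ^ 2 * w i x) ∧
  (∀ i, w i (ℓ i) = 0) ∧
  (w 0 0 = w 1 0 ∧ w 1 0 = w 2 0) ∧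
  (∑ i, (h i 0) ^ 2 * deriv (w i) 0 = 0)

lemma flux_hasDerivAt {h w : ℝ → ℝ} (hh : ContDiff ℝ 1 h) (hw : ContDiff ℝ 2 w) {x r : ℝ}
    (H : deriv (fun t => (h t) ^ 2 * deriv w t) x = r) :
    HasDerivAt (fun t => (h t) ^ 2 * deriv w t) r x := by
  rw [← H]
  apply DifferentiableAt.hasDerivAt
  have h1 : Differentiable ℝ h := hh.differentiable (by norm_num)
  have h2 : Differentiable ℝ (deriv w) := by
    have : ContDiff ℝ 1 (deriv w) := by
      have h3 : ContDiff ℝ (1 + 1) w := by simpa [one_add_one_eq_two] using hw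
      exact (contDiff_succ_iff_deriv.1 h3).2.2
    exact this.differentiable (by norm_num)
  exact ((h1 x).pow 2).mul (h2 x)

lemma edge_unique {L μ : ℝ} {h u p : ℝ → ℝ} (hc : Continuous h)
    (hpos : ∀ x ∈ Icc 0 L, 0 < h x)
    (hu : ∀ x ∈ Icc 0 L, HasDerivAt u (p x / (h x) ^ 2) x)
    (hp : ∀ x ∈ Icc 0 L, HasDerivAt p (-μ * (h x) ^ 2 * u x) x)
    (hu0 : u 0 = 0) (hp0 : p 0 = 0) : ∀ x ∈ Icc 0 L, u x = 0 := by
  obtain ⟨A, hA⟩ := isCompact_Icc.exists_bound_of_continuousOn (s := Icc 0 L)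
    (f := fun x => 1 / (h x) ^ 2)
    (ContinuousOn.div continuousOn_const (hc.pow 2).continuousOn
      (fun x hx => (pow_pos (hpos x hx) 2).ne'))
  obtain ⟨B, hB⟩ := isCompact_Icc.exists_bound_of_continuousOn (s := Icc 0 L)
    (f := fun x => -μ * (h x) ^ 2) ((continuous_const.mul (hc.pow 2)).continuousOn)
  intro x hx
  have key := norm_le_gronwallBound_of_norm_deriv_right_le (f := fun t => (u t, p t))
    (f' := fun x => (p x / (h x) ^ 2, -μ * (h x) ^ 2 * u x)) (δ := 0) (K := max A B) (ε := 0)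
    (a := 0) (b := L)
    (fun t ht => ((hu t ht).prodMk (hp t ht)).continuousAt.continuousWithinAt)
    (fun t ht => ((hu t (Ico_subset_Icc_self ht)).prodMk
      (hp t (Ico_subset_Icc_self ht))).hasDerivWithinAt)
    (by simp [hu0, hp0])
    (by
      intro t ht
      have a1 := hA t (Ico_subset_Icc_self ht)
      have b1 := hB t (Ico_subset_Icc_self ht)
      rw [add_zero, Prod.norm_mk, Prod.norm_mk]
      have hA0 : 0 ≤ max A B := (norm_nonneg _).trans (a1.trans (le_max_left _ _))
      apply max_le
      · rw [div_eq_mul_one_div, mul_comm, norm_mul]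
        exact mul_le_mul (a1.trans (le_max_left _ _)) (le_max_right _ _) (norm_nonneg _) hA0
      · rw [norm_mul]
        exact mul_le_mul (b1.trans (le_max_right _ _)) (le_max_left _ _) (norm_nonneg _) hA0)
    x hx
  rw [gronwallBound_ε0_δ0] at key
  have := norm_le_zero_iff.1 key
  exact congrArg Prod.fst this

lemma edge_prop {L μ c : ℝ} {h w v : ℝ → ℝ} (hL : 0 < L) (hh : ContDiff ℝ 1 h)
    (hpos : ∀ x ∈ Icc 0 L, 0 < h x)
    (hw : ContDiff ℝ 2 w) (hv : ContDiff ℝ 2 v)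
    (ew : ∀ x ∈ Icc 0 L, deriv (fun t => (h t) ^ 2 * deriv w t) x = -μ * (h x) ^ 2 * w x)
    (ev : ∀ x ∈ Icc 0 L, deriv (fun t => (h t) ^ 2 * deriv v t) x = -μ * (h x) ^ 2 * v x)
    (wL : w L = 0) (vL : v L = 0) (w0 : w 0 ≠ 0) (hc : v 0 = c * w 0) :
    ∀ x ∈ Icc 0 L, v x = c * w x := by
  have dw : ∀ x, HasDerivAt w (deriv w x) x := fun x =>
    (hw.differentiable (by norm_num) x).hasDerivAt
  have dv : ∀ x, HasDerivAt v (deriv v x) x := fun x =>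
    (hv.differentiable (by norm_num) x).hasDerivAt
  have fw := fun x hx => flux_hasDerivAt hh hw (ew x hx)
  have fv := fun x hx => flux_hasDerivAt hh hv (ev x hx)
  have W : ∀ x ∈ Icc 0 L, HasDerivAt (fun t => w t * ((h t) ^ 2 * deriv v t)
      - v t * ((h t) ^ 2 * deriv w t)) 0 x := by
    intro x hx
    refine HasDerivAt.congr_deriv (((dw x).mul (fv x hx)).sub ((dv x).mul (fw x hx))) ?_
    ring
  have Wc := constant_of_has_deriv_right_zero
    (fun x hx => (W x hx).continuousAt.continuousWithinAt)
    (fun x hx => (W x (Ico_subset_Icc_self hx)).hasDerivWithinAt) L ⟨hL.le, le_rfl⟩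
  simp only [wL, vL, hc] at Wc
  have p0 : (h 0) ^ 2 * deriv v 0 - c * ((h 0) ^ 2 * deriv w 0) = 0 := by
    apply mul_left_cancel₀ w0
    linarith
  have := edge_unique (μ := μ) (u := fun t => v t - c * w t)
    (p := fun t => (h t) ^ 2 * deriv v t - c * ((h t) ^ 2 * deriv w t)) hh.continuous hpos
    (fun x hx => by
      refine HasDerivAt.congr_deriv ((dv x).sub ((dw x).const_mul c)) ?_
      have := (hpos x hx).ne'
      field_simp)
    (fun x hx => by
      refine HasDerivAt.congr_deriv ((fv x hx).sub ((fw x hx).const_mul c)) ?_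
      ring)
    (by simp [hc]) p0
  exact fun x hx => sub_eq_zero.1 (this x hx)

/-- Every eigenvalue of the limit spectral problem possessing an eigenfunction not
vanishing at the vertex is simple: two eigenfunctions with the same eigenvalue are
proportional on the graph. -/
theorem limit_eigenvalue_simple
    (ℓ : Fin 3 → ℝ) (h : Fin 3 → ℝ → ℝ)
    (hℓ : ∀ i, 0 < ℓ i)
    (hh : ∀ i, ContDiff ℝ 1 (h i))
    (hhpos : ∀ i, ∀ x ∈ Icc 0 (ℓ i), 0 < h i x)
    (μ : ℝ) (w v : Fin 3 → ℝ → ℝ)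
    (hw : IsLimitEigenpair ℓ h μ w)
    (hv : IsLimitEigenpair ℓ h μ v)
    (hw0 : w 0 0 ≠ 0) :
    ∃ c : ℝ, ∀ i, ∀ x ∈ Icc 0 (ℓ i), v i x = c * w i x := by
  obtain ⟨cw, -, ew, wL, ⟨w01, w12⟩, -⟩ := hw
  obtain ⟨cv, -, ev, vL, ⟨v01, v12⟩, -⟩ := hv
  have hwi : ∀ i, w i 0 = w 0 0 := by
    intro i; fin_cases i
    · rfl
    · exact w01.symm
    · exact (w01.trans w12).symm
  have hvi : ∀ i, v i 0 = v 0 0 := by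
    intro i; fin_cases i
    · rfl
    · exact v01.symm
    · exact (v01.trans v12).symm
  refine ⟨v 0 0 / w 0 0, fun i => edge_prop (hℓ i) (hh i) (hhpos i) (cw i) (cv i) (ew i) (ev i)
    (wL i) (vL i) ?_ ?_⟩
  · rw [hwi]; exact hw0
  · rw [hwi i, hvi i]; field_simp
end

section
/- Let (μ₀, (w₁, w₂, w₃)) be an eigenpair of the limit spectral problem on the star graph. Let Φ_i : [0, ℓ_i] → ℝ be continuous (i = 1,2,3), and let D, ν ∈ ℝ. Suppose φ_i : [0, ℓ_i] → ℝ are twice continuously differentiable and satisfy: −(h_i² φ_i′)′(x) − μ₀ h_i(x)² φ_i(x) = Φ_i(x) + ν h_i(x)² w_i(x) on [0, ℓ_i]; φ_i(ℓ_i) = 0; φ₁(0) = φ₂(0) = φ₃(0); and Σ_{i=1}^{3} h_i(0)² φ_i′(0) = D. Then Σ_{i=1}^{3} ∫₀^{ℓ_i} Φ_i(x) w_i(x) dx − D · w₁(0) + ν Σ_{i=1}^{3} ∫₀^{ℓ_i} h_i(x)² w_i(x)² dx = 0. -/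
open Set

theorem edge_aux (L : ℝ) (hL : 0 < L) (h w φ Φ : ℝ → ℝ) (μ ν : ℝ)
    (hh : ContDiff ℝ 1 h) (hw : ContDiff ℝ 2 w) (hφ : ContDiff ℝ 2 φ)
    (hΦ : ContinuousOn Φ (Icc 0 L))
    (hwo : ∀ x ∈ Icc 0 L, deriv (fun t => (h t) ^ 2 * deriv w t) x = -μ * (h x) ^ 2 * w x)
    (hφo : ∀ x ∈ Icc 0 L,
      -(deriv (fun t => (h t) ^ 2 * deriv φ t) x) - μ * (h x) ^ 2 * φ x
        = Φ x + ν * (h x) ^ 2 * w x)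
    (hwL : w L = 0) (hφL : φ L = 0) :
    (∫ x in (0 : ℝ)..L, Φ x * w x) + ν * (∫ x in (0 : ℝ)..L, (h x) ^ 2 * (w x) ^ 2)
      = h 0 ^ 2 * deriv φ 0 * w 0 - h 0 ^ 2 * deriv w 0 * φ 0 := by
  have dh : Differentiable ℝ h := hh.differentiable (by norm_num)
  have dw : Differentiable ℝ w := hw.differentiable (by norm_num)
  have dφ : Differentiable ℝ φ := hφ.differentiable (by norm_num)
  have dw' : Differentiable ℝ (deriv w) := by
    have := hw.differentiable_iteratedDeriv 1 (by norm_num)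
    simpa [iteratedDeriv_one] using this
  have dφ' : Differentiable ℝ (deriv φ) := by
    have := hφ.differentiable_iteratedDeriv 1 (by norm_num)
    simpa [iteratedDeriv_one] using this
  have i1 : IntervalIntegrable (fun x => Φ x * w x) MeasureTheory.volume 0 L := by
    apply ContinuousOn.intervalIntegrable
    rw [uIcc_of_le hL.le]
    exact hΦ.mul hw.continuous.continuousOn
  have i2 : IntervalIntegrable (fun x => ν * ((h x) ^ 2 * (w x) ^ 2)) MeasureTheory.volume 0 L := by
    apply Continuous.intervalIntegrable
    have := hh.continuous
    have := hw.continuous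
    fun_prop
  have key : ∀ x ∈ uIcc 0 L, HasDerivAt
      (fun x => φ x * ((h x) ^ 2 * deriv w x) - w x * ((h x) ^ 2 * deriv φ x))
      (Φ x * w x + ν * ((h x) ^ 2 * (w x) ^ 2)) x := by
    intro x hx
    rw [uIcc_of_le hL.le] at hx
    have a1 : HasDerivAt (fun t => (h t) ^ 2 * deriv w t) _ x :=
      (((dh.pow 2).mul dw') x).hasDerivAt
    have a2 : HasDerivAt (fun t => (h t) ^ 2 * deriv φ t) _ x :=
      (((dh.pow 2).mul dφ') x).hasDerivAt
    have b := ((dφ x).hasDerivAt.mul a1).sub ((dw x).hasDerivAt.mul a2)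
    have e1 := hwo x hx
    have e2 := hφo x hx
    refine b.congr_deriv ?_
    change deriv φ x * (h x ^ 2 * deriv w x) + φ x * deriv (fun t => (h t) ^ 2 * deriv w t) x
      - (deriv w x * (h x ^ 2 * deriv φ x) + w x * deriv (fun t => (h t) ^ 2 * deriv φ t) x) = _
    linear_combination φ x * e1 + w x * e2
  have r := intervalIntegral.integral_eq_sub_of_hasDerivAt key (i1.add i2)
  rw [intervalIntegral.integral_add i1 i2, intervalIntegral.integral_const_mul] at r
  rw [r, hwL, hφL]
  ring

/-- Fredholm compatibility condition for the inhomogeneous problem at the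
eigenvalue `μ₀` of the limit spectral problem: any solution `(φ₁, φ₂, φ₃)` of the
inhomogeneous problem with right-hand sides `Φ_i + ν h_i² w_i` and vertex flux `D`
forces the compatibility relation determining `ν`. -/
theorem limit_fredholm_compatibility
    (ℓ : Fin 3 → ℝ) (h : Fin 3 → ℝ → ℝ)
    (hℓ : ∀ i, 0 < ℓ i)
    (hh : ∀ i, ContDiff ℝ 1 (h i))
    (hhpos : ∀ i, ∀ x ∈ Icc 0 (ℓ i), 0 < h i x)
    (μ₀ : ℝ) (w : Fin 3 → ℝ → ℝ)
    (hw : IsLimitEigenpair ℓ h μ₀ w)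
    (Φ : Fin 3 → ℝ → ℝ) (hΦ : ∀ i, ContinuousOn (Φ i) (Icc 0 (ℓ i)))
    (D ν : ℝ) (φ : Fin 3 → ℝ → ℝ)
    (hφreg : ∀ i, ContDiff ℝ 2 (φ i))
    (hode : ∀ i, ∀ x ∈ Icc 0 (ℓ i),
      -(deriv (fun t => (h i t) ^ 2 * deriv (φ i) t) x) - μ₀ * (h i x) ^ 2 * φ i x
        = Φ i x + ν * (h i x) ^ 2 * w i x)
    (hbc : ∀ i, φ i (ℓ i) = 0)
    (hvertex : φ 0 0 = φ 1 0 ∧ φ 1 0 = φ 2 0)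
    (hkirchhoff : ∑ i, (h i 0) ^ 2 * deriv (φ i) 0 = D) :
    (∑ i, ∫ x in (0 : ℝ)..(ℓ i), Φ i x * w i x) - D * w 0 0
      + ν * (∑ i, ∫ x in (0 : ℝ)..(ℓ i), (h i x) ^ 2 * (w i x) ^ 2) = 0 := by
  obtain ⟨hw2, -, hwo, hwL, ⟨v1, v2⟩, hk⟩ := hw
  obtain ⟨p1, p2⟩ := hvertex
  have E := fun i => edge_aux (ℓ i) (hℓ i) (h i) (w i) (φ i) (Φ i) μ₀ ν (hh i) (hw2 i) (hφreg i)
    (hΦ i) (hwo i) (hode i) (hwL i) (hbc i)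
  have E0 := E 0
  have E1 := E 1
  have E2 := E 2
  rw [← p2, ← p1, ← v2, ← v1] at E2
  rw [← p1, ← v1] at E1
  simp only [Fin.sum_univ_three] at *
  linear_combination E0 + E1 + E2 + w 0 0 * hkirchhoff - φ 0 0 * hk
end

section
/- Let (μ₀, (w₁, w₂, w₃)) be an eigenpair of the limit spectral problem on the star graph. Suppose ν ∈ ℝ and twice continuously differentiable functions φ_i : [0, ℓ_i] → ℝ satisfy: −(h_i² φ_i′)′(x) − μ₀ h_i(x)² φ_i(x) = ν h_i(x)² w_i(x) on [0, ℓ_i]; φ_i(ℓ_i) = 0; φ₁(0) = φ₂(0) = φ₃(0); and Σ_{i=1}^{3} h_i(0)² φ_i′(0) = 0. Then ν = 0. If moreover w₁(0) ≠ 0 and Σ_{i=1}^{3} ∫₀^{ℓ_i} h_i(x)² φ_i(x) w_i(x) dx = 0, then φ_i is identically zero on [0, ℓ_i] for every i. -/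
open Set

lemma aux_flux_hasDeriv (h u : ℝ → ℝ) (hh : ContDiff ℝ 1 h) (hu : ContDiff ℝ 2 u) (x : ℝ) :
    HasDerivAt (fun t => (h t) ^ 2 * deriv u t)
      (deriv (fun t => (h t) ^ 2 * deriv u t) x) x := by
  have hu' : ContDiff ℝ 1 (deriv u) :=
    ((contDiff_succ_iff_deriv (n := 1)).1 (by simpa [one_add_one_eq_two] using hu)).2.2
  have : ContDiff ℝ 1 (fun t => (h t) ^ 2 * deriv u t) := (hh.pow 2).mul hu'
  exact ((this.differentiable (by norm_num)) x).hasDerivAt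

lemma aux_hasDeriv (u : ℝ → ℝ) (hu : ContDiff ℝ 2 u) (x : ℝ) :
    HasDerivAt u (deriv u x) x :=
  ((hu.differentiable (by norm_num)) x).hasDerivAt

/-- uniqueness for the linear system -/
lemma aux_uniq (l : ℝ) (hl : 0 < l) (p u q : ℝ → ℝ) (u' : ℝ → ℝ) (m : ℝ) (hp : Continuous p)
    (hpos : ∀ x ∈ Icc 0 l, 0 < p x)
    (hu : ∀ x ∈ Icc 0 l, HasDerivAt u (u' x) x)
    (hqe : ∀ x, q x = p x * u' x)
    (hq : ∀ x ∈ Icc 0 l, HasDerivAt q (-m * p x * u x) x)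
    (h0 : u 0 = 0) (hq0 : q 0 = 0) : ∀ x ∈ Icc 0 l, u x = 0 := by
  have hc : ContinuousOn (fun x => (p x)⁻¹ - m * p x) (Icc 0 l) :=
    (hp.continuousOn.inv₀ (fun x hx => (hpos x hx).ne')).sub (by fun_prop)
  obtain ⟨K, hK⟩ := isCompact_Icc.exists_bound_of_continuousOn hc
  have hE : ∀ x ∈ Icc 0 l, HasDerivAt (fun x => (u x ^ 2 + q x ^ 2) * Real.exp (-K * x))
      ((2 * u x * u' x + 2 * q x * (-m * p x * u x)) * Real.exp (-K * x)
        + (u x ^ 2 + q x ^ 2) * (Real.exp (-K * x) * (-K))) x := by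
    intro x hx
    have h1 := ((hu x hx).pow 2).add ((hq x hx).pow 2)
    have h2 : HasDerivAt (fun x => Real.exp (-K * x)) (Real.exp (-K * x) * (-K)) x := by
      simpa using ((hasDerivAt_id x).const_mul (-K)).exp
    refine (h1.mul h2).congr_deriv ?_
    simp
  have hanti : AntitoneOn (fun x => (u x ^ 2 + q x ^ 2) * Real.exp (-K * x)) (Icc 0 l) := by
    apply antitoneOn_of_deriv_nonpos (convex_Icc 0 l)
    · exact fun x hx => (hE x hx).continuousAt.continuousWithinAt
    · exact fun x hx => (hE x (interior_subset hx)).differentiableAt.differentiableWithinAt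
    · intro x hx
      have hx := interior_subset hx
      rw [(hE x hx).deriv]
      have hu'x : u' x = q x * (p x)⁻¹ := by
        rw [hqe]; have := (hpos x hx).ne'; field_simp
      have hb := abs_le.1 (hK x hx)
      have : 2 * u x * u' x + 2 * q x * (-m * p x * u x) ≤ K * (u x ^ 2 + q x ^ 2) := by
        rw [hu'x]
        have e : 2 * u x * (q x * (p x)⁻¹) + 2 * q x * (-m * p x * u x)
          = ((p x)⁻¹ - m * p x) * (2 * u x * q x) := by ring
        rw [e]
        nlinarith [mul_nonneg (sub_nonneg.2 hb.2) (sq_nonneg (u x + q x)),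
          mul_nonneg (by linarith [hb.1] : 0 ≤ K + ((p x)⁻¹ - m * p x)) (sq_nonneg (u x - q x))]
      nlinarith [Real.exp_pos (-K * x)]
  intro x hx
  have := hanti (left_mem_Icc.2 hl.le) hx hx.1
  simp only [h0, hq0] at this
  have h3 : u x ^ 2 + q x ^ 2 ≤ 0 := by
    by_contra hcon
    push Not at hcon
    have := mul_pos hcon (Real.exp_pos (-K * x))
    norm_num at *
    linarith
  have : u x ^ 2 = 0 := by nlinarith [sq_nonneg (u x), sq_nonneg (q x)]
  exact pow_eq_zero_iff (two_ne_zero) |>.1 this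

/-- Homogeneous case of the Fredholm alternative for the limit spectral problem:
if `(φ₁, φ₂, φ₃)` solves the problem with right-hand sides `ν h_i² w_i` and zero
vertex flux, then `ν = 0`; if moreover the eigenfunction does not vanish at the
vertex and `φ` is orthogonal to `w`, then `φ` vanishes identically. -/
theorem limit_fredholm_homogeneous
    (ℓ : Fin 3 → ℝ) (h : Fin 3 → ℝ → ℝ)
    (hℓ : ∀ i, 0 < ℓ i)
    (hh : ∀ i, ContDiff ℝ 1 (h i))
    (hhpos : ∀ i, ∀ x ∈ Icc 0 (ℓ i), 0 < h i x)
    (μ₀ : ℝ) (w : Fin 3 → ℝ → ℝ)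
    (hw : IsLimitEigenpair ℓ h μ₀ w)
    (ν : ℝ) (φ : Fin 3 → ℝ → ℝ)
    (hφreg : ∀ i, ContDiff ℝ 2 (φ i))
    (hode : ∀ i, ∀ x ∈ Icc 0 (ℓ i),
      -(deriv (fun t => (h i t) ^ 2 * deriv (φ i) t) x) - μ₀ * (h i x) ^ 2 * φ i x
        = ν * (h i x) ^ 2 * w i x)
    (hbc : ∀ i, φ i (ℓ i) = 0)
    (hvertex : φ 0 0 = φ 1 0 ∧ φ 1 0 = φ 2 0)
    (hkirchhoff : ∑ i, (h i 0) ^ 2 * deriv (φ i) 0 = 0) :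
    ν = 0 ∧
      ((w 0 0 ≠ 0 ∧ (∑ i, ∫ x in (0 : ℝ)..(ℓ i), (h i x) ^ 2 * φ i x * w i x) = 0) →
        ∀ i, ∀ x ∈ Icc 0 (ℓ i), φ i x = 0) := by
  obtain ⟨hwreg, hwne, hwode, hwbc, hwv, hwk⟩ := hw
  have hw0 : ∀ i, w i 0 = w 0 0 := by
    intro i; fin_cases i
    · rfl
    · exact hwv.1.symm
    · exact (hwv.1.trans hwv.2).symm
  have hφ0 : ∀ i, φ i 0 = φ 0 0 := by
    intro i; fin_cases i
    · rfl
    · exact hvertex.1.symm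
    · exact (hvertex.1.trans hvertex.2).symm
  have hcw : ∀ i, Continuous (w i) := fun i => (hwreg i).continuous
  have hch : ∀ i, Continuous (h i) := fun i => (hh i).continuous
  have hcont : ∀ i, Continuous (fun x => (h i x) ^ 2 * w i x ^ 2) := fun i =>
    ((hch i).pow 2).mul ((hcw i).pow 2)
  have hpos : 0 < ∑ i, ∫ x in (0 : ℝ)..(ℓ i), (h i x) ^ 2 * w i x ^ 2 := by
    apply Finset.sum_pos'
    · intro i _
      exact intervalIntegral.integral_nonneg (hℓ i).le (fun x _ => by positivity)
    · obtain ⟨i, x, hx, hne⟩ := hwne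
      refine ⟨i, Finset.mem_univ _, ?_⟩
      refine intervalIntegral.integral_pos (hℓ i) (hcont i).continuousOn
        (fun x _ => by positivity) ⟨x, hx, ?_⟩
      have := hhpos i x hx
      positivity
  have hW : ∀ i, ∀ x ∈ Icc 0 (ℓ i), HasDerivAt
      (fun x => ((h i x) ^ 2 * deriv (φ i) x) * w i x - ((h i x) ^ 2 * deriv (w i) x) * φ i x)
      (-ν * ((h i x) ^ 2 * w i x ^ 2)) x := by
    intro i x hx
    refine (((aux_flux_hasDeriv _ _ (hh i) (hφreg i) x).mul (aux_hasDeriv _ (hwreg i) x)).sub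
      ((aux_flux_hasDeriv _ _ (hh i) (hwreg i) x).mul (aux_hasDeriv _ (hφreg i) x))).congr_deriv ?_
    have h1 := hode i x hx
    have h2 := hwode i x hx
    linear_combination (-w i x) * h1 - φ i x * h2
  have hint : ∀ i, -ν * ∫ x in (0 : ℝ)..(ℓ i), (h i x) ^ 2 * w i x ^ 2
      = -(((h i 0) ^ 2 * deriv (φ i) 0) * w 0 0 - ((h i 0) ^ 2 * deriv (w i) 0) * φ 0 0) := by
    intro i
    rw [← intervalIntegral.integral_const_mul,
      intervalIntegral.integral_eq_sub_of_hasDerivAt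
        (fun x hx => hW i x (by rwa [uIcc_of_le (hℓ i).le] at hx))
        ((continuous_const.mul (hcont i)).intervalIntegrable _ _)]
    rw [hbc, hwbc, hw0, hφ0]; ring
  have hν : ν = 0 := by
    have : -ν * ∑ i, ∫ x in (0 : ℝ)..(ℓ i), (h i x) ^ 2 * w i x ^ 2 = 0 := by
      rw [Finset.mul_sum, Finset.sum_congr rfl (fun i _ => hint i), Finset.sum_neg_distrib,
        Finset.sum_sub_distrib, ← Finset.sum_mul, ← Finset.sum_mul, hwk, hkirchhoff]
      ring
    rcases mul_eq_zero.1 this with h | h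
    · linarith
    · exact absurd h hpos.ne'
  refine ⟨hν, ?_⟩
  rintro ⟨hwne0, horth⟩
  subst hν
  obtain ⟨c, hc⟩ : ∃ c, c * w 0 0 = φ 0 0 := ⟨φ 0 0 / w 0 0, by field_simp⟩
  have key : ∀ i, ∀ x ∈ Icc 0 (ℓ i), φ i x - c * w i x = 0 := by
    intro i
    refine aux_uniq (ℓ i) (hℓ i) (fun x => h i x ^ 2) (fun x => φ i x - c * w i x)
      (fun x => h i x ^ 2 * deriv (φ i) x - c * (h i x ^ 2 * deriv (w i) x))
      (fun x => deriv (φ i) x - c * deriv (w i) x) μ₀ ((hch i).pow 2)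
      (fun x hx => pow_pos (hhpos i x hx) 2) ?_ ?_ ?_ ?_ ?_
    · intro x _
      exact (aux_hasDeriv _ (hφreg i) x).sub ((aux_hasDeriv _ (hwreg i) x).const_mul c)
    · intro x; ring
    · intro x hx
      refine ((aux_flux_hasDeriv _ _ (hh i) (hφreg i) x).sub
        ((aux_flux_hasDeriv _ _ (hh i) (hwreg i) x).const_mul c)).congr_deriv ?_
      have h1 := hode i x hx
      have h2 := hwode i x hx
      linear_combination -h1 - c * h2
    · show φ i 0 - c * w i 0 = 0
      rw [hφ0, hw0, hc, sub_self]
    · have h1 := hint i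
      rw [← hc] at h1
      refine (mul_eq_zero.1 (?_ : _ * w 0 0 = 0)).resolve_right hwne0
      linear_combination h1
  have hc0 : c = 0 := by
    have : c * ∑ i, ∫ x in (0 : ℝ)..(ℓ i), (h i x) ^ 2 * w i x ^ 2 = 0 := by
      refine Eq.trans ?_ horth
      rw [Finset.mul_sum]
      refine Finset.sum_congr rfl (fun i _ => ?_)
      rw [← intervalIntegral.integral_const_mul]
      refine intervalIntegral.integral_congr (fun x hx => ?_)
      rw [uIcc_of_le (hℓ i).le] at hx
      have := key i x hx
      show c * (h i x ^ 2 * w i x ^ 2) = h i x ^ 2 * φ i x * w i x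
      linear_combination (-(h i x ^ 2 * w i x)) * this
    exact (mul_eq_zero.1 this).resolve_right hpos.ne'
  intro i x hx
  have := key i x hx
  rw [hc0] at this
  linarith
end

section
/- Let (μ₀, (w₁, w₂, w₃)) be an eigenpair of the limit spectral problem on the star graph with w₁(0) ≠ 0. Let Φ_i : [0, ℓ_i] → ℝ be continuous (i = 1,2,3) and D ∈ ℝ. Then there exist a unique ν ∈ ℝ and unique twice continuously differentiable functions φ_i : [0, ℓ_i] → ℝ (i = 1,2,3) such that: −(h_i² φ_i′)′(x) − μ₀ h_i(x)² φ_i(x) = Φ_i(x) + ν h_i(x)² w_i(x) on [0, ℓ_i]; φ_i(ℓ_i) = 0; φ₁(0) = φ₂(0) = φ₃(0); Σ_{i=1}^{3} h_i(0)² φ_i′(0) = D; and Σ_{i=1}^{3} ∫₀^{ℓ_i} h_i(x)² φ_i(x) w_i(x) dx = 0. -/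
open Set

/-- `(ν, φ)` solves the inhomogeneous limit problem with data `(Φ, D)` at the
eigenpair `(μ₀, w)`, with `φ` orthogonal to the eigenfunction `w`. -/
def SolvesInhom (ℓ : Fin 3 → ℝ) (h : Fin 3 → ℝ → ℝ) (μ₀ : ℝ)
    (w Φ : Fin 3 → ℝ → ℝ) (D : ℝ) (ν : ℝ) (φ : Fin 3 → ℝ → ℝ) : Prop :=
  (∀ i, ContDiff ℝ 2 (φ i)) ∧
  (∀ i, ∀ x ∈ Icc 0 (ℓ i),
      -(deriv (fun t => (h i t) ^ 2 * deriv (φ i) t) x) - μ₀ * (h i x) ^ 2 * φ i x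
        = Φ i x + ν * (h i x) ^ 2 * w i x) ∧
  (∀ i, φ i (ℓ i) = 0) ∧
  (φ 0 0 = φ 1 0 ∧ φ 1 0 = φ 2 0) ∧
  (∑ i, (h i 0) ^ 2 * deriv (φ i) 0 = D) ∧
  (∑ i, ∫ x in (0 : ℝ)..(ℓ i), (h i x) ^ 2 * φ i x * w i x = 0)



lemma clamp_lip (R x y : ℝ) : |max (-R) (min R x) - max (-R) (min R y)| ≤ |x - y| := by
  calc _ ≤ |min R x - min R y| := by
        rw [max_comm, max_comm (-R)]; exact abs_max_sub_max_le_abs _ _ _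
    _ ≤ _ := by
        rw [min_comm, min_comm R]
        have := abs_min_sub_min_le_max x R y R
        simpa using this

lemma clamp_le_abs (R x : ℝ) (hR : 0 ≤ R) : |max (-R) (min R x)| ≤ |x| := by
  have := clamp_lip R x 0
  simpa [hR] using this

lemma clamp_le (R x : ℝ) (hR : 0 ≤ R) : |max (-R) (min R x)| ≤ R := by
  rw [abs_le]; constructor
  · exact le_max_left _ _
  · exact max_le (by linarith) (min_le_left _ _)

lemma clamp_eq (R x : ℝ) (hx : |x| ≤ R) : max (-R) (min R x) = x := by
  rw [abs_le] at hx
  rw [min_eq_right hx.2, max_eq_right hx.1]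

lemma cont_bd {ℓ : ℝ} {a : ℝ → ℝ} (ha : ContinuousOn a (Icc 0 ℓ)) :
    ∃ M, ∀ x ∈ Icc 0 ℓ, |a x| ≤ M := by
  obtain ⟨M, hM⟩ := isCompact_Icc.exists_bound_of_continuousOn ha
  exact ⟨M, hM⟩

lemma lin_bd {M a b u v : ℝ} (ha : |a| ≤ M) (hb : |b| ≤ M) :
    |a * v + b * u| ≤ 2 * M * max |u| |v| := by
  have hM : 0 ≤ M := (abs_nonneg _).trans ha
  calc _ ≤ |a| * |v| + |b| * |u| := by rw [← abs_mul, ← abs_mul]; exact abs_add_le _ _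
    _ ≤ M * max |u| |v| + M * max |u| |v| := by
      gcongr
      · exact le_max_right _ _
      · exact le_max_left _ _
    _ = _ := by ring

lemma ivp_system {ℓ : ℝ} (hℓ : 0 < ℓ) {a b f : ℝ → ℝ} (ha : ContinuousOn a (Icc 0 ℓ))
    (hb : ContinuousOn b (Icc 0 ℓ)) (hf : ContinuousOn f (Icc 0 ℓ)) :
    ∃ u v : ℝ → ℝ, u 0 = 0 ∧ v 0 = 0 ∧
      (∀ x ∈ Icc 0 ℓ, HasDerivWithinAt u (v x) (Icc 0 ℓ) x) ∧
      (∀ x ∈ Icc 0 ℓ, HasDerivWithinAt v (a x * v x + b x * u x + f x) (Icc 0 ℓ) x) := by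
  obtain ⟨A, hA⟩ := cont_bd ha
  obtain ⟨B, hB⟩ := cont_bd hb
  obtain ⟨F, hF⟩ := cont_bd hf
  obtain ⟨M, hM1, hMA, hMB, hMF⟩ : ∃ M, 1 ≤ M ∧ A ≤ M ∧ B ≤ M ∧ F ≤ M :=
    ⟨max (max 1 A) (max B F), by simp, by simp, by simp, by simp⟩
  replace hA := fun x hx => (hA x hx).trans hMA
  replace hB := fun x hx => (hB x hx).trans hMB
  replace hF := fun x hx => (hF x hx).trans hMF
  set R := max 0 (gronwallBound 0 (2 * M) M ℓ) with hRdef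
  have hR : 0 ≤ R := le_max_left _ _
  set c : ℝ → ℝ := fun x => max (-R) (min R x) with hc
  set V : ℝ → ℝ × ℝ → ℝ × ℝ := fun t p => (c p.2, a t * c p.2 + b t * c p.1 + f t) with hV
  have hVb : ∀ t ∈ Icc 0 ℓ, ∀ p : ℝ × ℝ, ‖V t p‖ ≤ 2 * M * max |c p.1| |c p.2| + M := by
    intro t ht p
    simp only [hV, Prod.norm_mk, Real.norm_eq_abs]
    have h0 : |c p.2| ≤ max |c p.1| |c p.2| := le_max_right _ _
    have h1 := abs_nonneg (c p.2)
    apply max_le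
    · nlinarith
    · refine (abs_add_le _ _).trans ?_
      exact add_le_add (lin_bd (hA t ht) (hB t ht)) (hF t ht)
  have hPL : IsPicardLindelof V (tmin := 0) (tmax := ℓ) ⟨0, left_mem_Icc.2 hℓ.le⟩ (0 : ℝ × ℝ)
      ((2 * M * R + M) * ℓ).toNNReal 0 (2 * M * R + M).toNNReal (2 * M).toNNReal := by
    have q1 : 0 ≤ (2 * M * R + M) * ℓ := by positivity
    have q2 : 0 ≤ 2 * M * R + M := by positivity
    have q3 : 0 ≤ 2 * M := by positivity
    constructor
    · intro t ht
      apply LipschitzWith.lipschitzOnWith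
      apply LipschitzWith.of_dist_le_mul
      intro p q
      simp only [hV, Prod.dist_eq, Real.dist_eq, Real.coe_toNNReal _ q3]
      have e1 := clamp_lip R p.1 q.1
      have e2 := clamp_lip R p.2 q.2
      have h0 : |p.2 - q.2| ≤ max |p.1 - q.1| |p.2 - q.2| := le_max_right _ _
      have h1 := abs_nonneg (p.2 - q.2)
      apply max_le
      · refine e2.trans ?_
        nlinarith
      · have : a t * c p.2 + b t * c p.1 + f t - (a t * c q.2 + b t * c q.1 + f t)
          = a t * (c p.2 - c q.2) + b t * (c p.1 - c q.1) := by ring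
        rw [this]
        refine (lin_bd (hA t ht) (hB t ht)).trans ?_
        have := max_le_max e1 e2
        gcongr
    · intro p _
      simp only [hV]
      fun_prop
    · intro t ht p _
      refine (hVb t ht p).trans ?_
      have := max_le (clamp_le R p.1 hR) (clamp_le R p.2 hR)
      rw [Real.coe_toNNReal _ q2]
      gcongr
    · rw [Real.coe_toNNReal _ q2, Real.coe_toNNReal _ q1]
      simp [hℓ.le]
  obtain ⟨α, hα0, hα⟩ := hPL.exists_eq_forall_mem_Icc_hasDerivWithinAt₀
  simp only at hα0
  have hαb : ∀ x ∈ Icc 0 ℓ, ‖α x‖ ≤ R := by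
    intro x hx
    have := norm_le_gronwallBound_of_norm_deriv_right_le (f := α) (f' := fun t => V t (α t))
      (δ := 0) (K := 2 * M) (ε := M) (a := 0) (b := ℓ)
      (fun t ht => (hα t ht).continuousWithinAt)
      (fun t ht => (hα t ⟨ht.1, ht.2.le⟩).mono_of_mem_nhdsWithin (Icc_mem_nhdsGE_of_mem ht))
      (by simp [hα0])
      (fun t ht => by
        refine (hVb t ⟨ht.1, ht.2.le⟩ _).trans ?_
        have := max_le_max (clamp_le_abs R (α t).1 hR) (clamp_le_abs R (α t).2 hR)
        have e : ‖α t‖ = max |(α t).1| |(α t).2| := rfl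
        rw [e]
        gcongr) x hx
    refine this.trans (le_trans ?_ (le_max_right _ _))
    apply gronwallBound_mono le_rfl (by linarith) (by linarith)
    simpa using hx.2
  have hc1 : ∀ x ∈ Icc 0 ℓ, c (α x).1 = (α x).1 := fun x hx =>
    clamp_eq _ _ ((norm_fst_le (α x)).trans (hαb x hx))
  have hc2 : ∀ x ∈ Icc 0 ℓ, c (α x).2 = (α x).2 := fun x hx =>
    clamp_eq _ _ ((norm_snd_le (α x)).trans (hαb x hx))
  refine ⟨fun x => (α x).1, fun x => (α x).2, by simp [hα0], by simp [hα0], ?_, ?_⟩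
  · intro x hx
    have := (ContinuousLinearMap.fst ℝ ℝ ℝ).hasFDerivAt.comp_hasDerivWithinAt x (hα x hx)
    simpa [Function.comp_def, hV, hc2 x hx] using this
  · intro x hx
    have := (ContinuousLinearMap.snd ℝ ℝ ℝ).hasFDerivAt.comp_hasDerivWithinAt x (hα x hx)
    simpa [Function.comp_def, hV, hc1 x hx, hc2 x hx] using this

lemma contDiff_two_of {U V G : ℝ → ℝ} (h1 : ∀ x, HasDerivAt U (V x) x)
    (h2 : ∀ x, HasDerivAt V (G x) x) (hG : Continuous G) : ContDiff ℝ 2 U := by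
  have e1 : deriv U = V := funext fun x => (h1 x).deriv
  have e2 : deriv V = G := funext fun x => (h2 x).deriv
  rw [show (2 : WithTop ℕ∞) = 1 + 1 by norm_num, contDiff_succ_iff_deriv]
  refine ⟨fun x => (h1 x).differentiableAt, by simp, ?_⟩
  rw [e1, contDiff_one_iff_deriv, e2]
  exact ⟨fun x => (h2 x).differentiableAt, hG⟩

lemma ivp_right {ℓ : ℝ} (hℓ : 0 < ℓ) {a b f : ℝ → ℝ} (ha : ContinuousOn a (Icc 0 ℓ))
    (hb : ContinuousOn b (Icc 0 ℓ)) (hf : ContinuousOn f (Icc 0 ℓ)) :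
    ∃ U V G : ℝ → ℝ, Continuous G ∧ (∀ x, HasDerivAt U (V x) x) ∧ (∀ x, HasDerivAt V (G x) x) ∧
      U 0 = 0 ∧ ∀ x ∈ Icc 0 ℓ, G x = a x * V x + b x * U x + f x := by
  obtain ⟨u, v, hu0, hv0, hu, hv⟩ := ivp_system hℓ ha hb hf
  have cu : ContinuousOn u (Icc 0 ℓ) := fun x hx => (hu x hx).continuousWithinAt
  have cv : ContinuousOn v (Icc 0 ℓ) := fun x hx => (hv x hx).continuousWithinAt
  have cg : ContinuousOn (fun x => a x * v x + b x * u x + f x) (Icc 0 ℓ) := by fun_prop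
  set G : ℝ → ℝ := IccExtend hℓ.le ((Icc 0 ℓ).domRestrict (fun x => a x * v x + b x * u x + f x))
    with hGdef
  have hGc : Continuous G := (continuousOn_iff_continuous_domRestrict.1 cg).Icc_extend'
  have hG : ∀ x ∈ Icc 0 ℓ, G x = a x * v x + b x * u x + f x := by
    intro x hx
    rw [hGdef, IccExtend_of_mem _ _ hx]; rfl
  have hV : ∀ x, HasDerivAt (fun x => ∫ t in (0:ℝ)..x, G t) (G x) x := fun x =>
    hGc.integral_hasStrictDerivAt 0 x |>.hasDerivAt
  set V : ℝ → ℝ := fun x => ∫ t in (0:ℝ)..x, G t with hVdef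
  have hVc : Continuous V := continuous_iff_continuousAt.2 fun x => (hV x).continuousAt
  have hU : ∀ x, HasDerivAt (fun x => ∫ t in (0:ℝ)..x, V t) (V x) x := fun x =>
    hVc.integral_hasStrictDerivAt 0 x |>.hasDerivAt
  set U : ℝ → ℝ := fun x => ∫ t in (0:ℝ)..x, V t with hUdef
  have key : ∀ (p P q : ℝ → ℝ), p 0 = P 0 → (∀ x ∈ Icc 0 ℓ, HasDerivWithinAt p (q x) (Icc 0 ℓ) x) →
      (∀ x ∈ Icc 0 ℓ, HasDerivAt P (q x) x) → ∀ x ∈ Icc 0 ℓ, p x = P x := by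
    intro p P q h0 hp hP
    refine eq_of_derivWithin_eq (fun x hx => (hp x hx).differentiableWithinAt)
      (fun x hx => (hP x hx).differentiableAt.differentiableWithinAt) ?_ h0
    intro x hx
    have hx' : x ∈ Icc 0 ℓ := ⟨hx.1, hx.2.le⟩
    have ud := uniqueDiffOn_Icc hℓ x hx'
    rw [(hp x hx').derivWithin ud, (hP x hx').hasDerivWithinAt.derivWithin ud]
  have hvV := key v V _ (by simp [hv0, hVdef]) hv (fun x hx => by rw [← hG x hx]; exact hV x)
  have huU := key u U _ (by simp [hu0, hUdef]) hu (fun x hx => by rw [hvV x hx]; exact hU x)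
  refine ⟨U, V, G, hGc, hU, hV, by simp [hUdef], fun x hx => ?_⟩
  rw [hG x hx, hvV x hx, huU x hx]

lemma ivp_left {ℓ : ℝ} (hℓ : 0 < ℓ) {a b f : ℝ → ℝ} (ha : ContinuousOn a (Icc 0 ℓ))
    (hb : ContinuousOn b (Icc 0 ℓ)) (hf : ContinuousOn f (Icc 0 ℓ)) :
    ∃ U : ℝ → ℝ, ContDiff ℝ 2 U ∧ U ℓ = 0 ∧
      ∀ x ∈ Icc 0 ℓ, deriv (deriv U) x = a x * deriv U x + b x * U x + f x := by
  have hm : MapsTo (fun x => ℓ - x) (Icc 0 ℓ) (Icc 0 ℓ) := by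
    intro x hx
    simp only [mem_Icc] at hx ⊢
    constructor <;> linarith [hx.1, hx.2]
  have hs : ContinuousOn (fun x => ℓ - x) (Icc 0 ℓ) := by fun_prop
  obtain ⟨U, V, G, hGc, hU, hV, hU0, hG⟩ := ivp_right hℓ
    (a := fun x => - a (ℓ - x)) (b := fun x => b (ℓ - x)) (f := fun x => f (ℓ - x))
    (ha.comp hs hm).neg (hb.comp hs hm) (hf.comp hs hm)
  have h1 : ∀ x, HasDerivAt (fun x => U (ℓ - x)) (- V (ℓ - x)) x := fun x => by
    simpa using (hU (ℓ - x)).comp_const_sub ℓ x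
  have h2 : ∀ x, HasDerivAt (fun x => - V (ℓ - x)) (G (ℓ - x)) x := fun x => by
    have := ((hV (ℓ - x)).comp_const_sub ℓ x).fun_neg
    rwa [neg_neg] at this
  refine ⟨fun x => U (ℓ - x), contDiff_two_of h1 h2 (by fun_prop), by simp [hU0], ?_⟩
  intro x hx
  have e1 : deriv (fun x => U (ℓ - x)) = fun x => - V (ℓ - x) := funext fun x => (h1 x).deriv
  rw [e1, (h2 x).deriv, hG _ (hm hx)]
  simp

lemma ivp_unique {ℓ : ℝ} {a b : ℝ → ℝ} (ha : ContinuousOn a (Icc 0 ℓ))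
    (hb : ContinuousOn b (Icc 0 ℓ)) {U : ℝ → ℝ} (hU : ContDiff ℝ 2 U) (h0 : U ℓ = 0)
    (h1 : deriv U ℓ = 0)
    (hode : ∀ x ∈ Icc 0 ℓ, deriv (deriv U) x = a x * deriv U x + b x * U x) :
    ∀ x ∈ Icc 0 ℓ, U x = 0 := by
  obtain ⟨A, hA⟩ := cont_bd ha
  obtain ⟨B, hB⟩ := cont_bd hb
  obtain ⟨M, hM1, hMA, hMB⟩ : ∃ M, 1 ≤ M ∧ A ≤ M ∧ B ≤ M :=
    ⟨max (max 1 A) B, by simp, by simp, by simp⟩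
  replace hA := fun x hx => (hA x hx).trans hMA
  replace hB := fun x hx => (hB x hx).trans hMB
  have dU : Differentiable ℝ U := hU.differentiable (by norm_num)
  have dU' : Differentiable ℝ (deriv U) := by
    have := hU
    rw [show (2 : WithTop ℕ∞) = 1 + 1 by norm_num, contDiff_succ_iff_deriv] at this
    exact this.2.2.differentiable (by norm_num)
  have hd : ∀ x, HasDerivAt (fun x => (U (ℓ - x), deriv U (ℓ - x)))
      (- deriv U (ℓ - x), - deriv (deriv U) (ℓ - x)) x := fun x =>
    ((dU (ℓ - x)).hasDerivAt.comp_const_sub ℓ x).prodMk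
      ((dU' (ℓ - x)).hasDerivAt.comp_const_sub ℓ x)
  have := eq_zero_of_abs_deriv_le_mul_abs_self_of_eq_zero_right (a := 0) (b := ℓ) (K := 2 * M)
    (fun x _ => (hd x).continuousAt.continuousWithinAt) (fun x _ => (hd x).hasDerivWithinAt)
    (by simp [h0, h1]) (by
      intro x hx
      have hx' : ℓ - x ∈ Icc 0 ℓ := by
        constructor <;> linarith [hx.1, hx.2]
      rw [hode _ hx']
      simp only [Prod.norm_mk, Real.norm_eq_abs, abs_neg]
      have h0 : |deriv U (ℓ - x)| ≤ max |U (ℓ - x)| |deriv U (ℓ - x)| := le_max_right _ _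
      have h1 := abs_nonneg (deriv U (ℓ - x))
      apply max_le
      · nlinarith
      · exact lin_bd (hA _ hx') (hB _ hx'))
  intro x hx
  have h2 := this (ℓ - x) (by constructor <;> linarith [hx.1, hx.2])
  simpa using congrArg Prod.fst h2

lemma c2_facts {U : ℝ → ℝ} (hU : ContDiff ℝ 2 U) :
    Differentiable ℝ U ∧ Differentiable ℝ (deriv U) ∧ Continuous (deriv (deriv U)) := by
  have := hU
  rw [show (2 : WithTop ℕ∞) = 1 + 1 by norm_num, contDiff_succ_iff_deriv] at this
  exact ⟨this.1, this.2.2.differentiable (by norm_num), this.2.2.continuous_deriv (by norm_num)⟩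

lemma sl_hasDeriv {h U : ℝ → ℝ} (hh : ContDiff ℝ 1 h) (hU : ContDiff ℝ 2 U) (x : ℝ) :
    HasDerivAt (fun t => (h t) ^ 2 * deriv U t)
      (h x ^ 2 * deriv (deriv U) x + 2 * h x * deriv h x * deriv U x) x := by
  have d1 := (hh.differentiable (by norm_num) x).hasDerivAt
  have d2 := ((c2_facts hU).2.1 x).hasDerivAt
  refine ((d1.fun_pow 2).fun_mul d2).congr_deriv ?_
  simp only [Nat.cast_ofNat, Nat.add_one_sub_one, pow_one]
  ring

lemma edge_exist {ℓ μ : ℝ} (hℓ : 0 < ℓ) {h F : ℝ → ℝ} (hh : ContDiff ℝ 1 h)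
    (hpos : ∀ x ∈ Icc 0 ℓ, 0 < h x) (hF : ContinuousOn F (Icc 0 ℓ)) :
    ∃ U : ℝ → ℝ, ContDiff ℝ 2 U ∧ U ℓ = 0 ∧ ∀ x ∈ Icc 0 ℓ,
      -(deriv (fun t => (h t) ^ 2 * deriv U t) x) - μ * (h x) ^ 2 * U x = F x := by
  have ch : ContinuousOn h (Icc 0 ℓ) := hh.continuous.continuousOn
  have ch' : ContinuousOn (deriv h) (Icc 0 ℓ) := (hh.continuous_deriv (by norm_num)).continuousOn
  have hne : ∀ x ∈ Icc 0 ℓ, h x ≠ 0 := fun x hx => (hpos x hx).ne'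
  obtain ⟨U, hU, hU0, hode⟩ := ivp_left hℓ (a := fun x => -(2 * deriv h x / h x))
    (b := fun _ => -μ) (f := fun x => -(F x / h x ^ 2))
    ((ContinuousOn.div (by fun_prop) ch hne).neg) continuousOn_const
    ((ContinuousOn.div hF (by fun_prop) (fun x hx => pow_ne_zero 2 (hne x hx))).neg)
  refine ⟨U, hU, hU0, fun x hx => ?_⟩
  have := hne x hx
  rw [(sl_hasDeriv hh hU x).deriv, hode x hx]
  field_simp
  ring

lemma edge_zero {ℓ μ : ℝ} {h U : ℝ → ℝ} (hh : ContDiff ℝ 1 h)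
    (hpos : ∀ x ∈ Icc 0 ℓ, 0 < h x) (hU : ContDiff ℝ 2 U) (h0 : U ℓ = 0) (h1 : deriv U ℓ = 0)
    (hode : ∀ x ∈ Icc 0 ℓ, deriv (fun t => (h t) ^ 2 * deriv U t) x = -μ * (h x) ^ 2 * U x) :
    ∀ x ∈ Icc 0 ℓ, U x = 0 := by
  have ch : ContinuousOn h (Icc 0 ℓ) := hh.continuous.continuousOn
  have ch' : ContinuousOn (deriv h) (Icc 0 ℓ) := (hh.continuous_deriv (by norm_num)).continuousOn
  have hne : ∀ x ∈ Icc 0 ℓ, h x ≠ 0 := fun x hx => (hpos x hx).ne'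
  refine ivp_unique (a := fun x => -(2 * deriv h x / h x))
    (b := fun _ => -μ) ((ContinuousOn.div (by fun_prop) ch hne).neg) continuousOn_const
    hU h0 h1 (fun x hx => ?_)
  have hx0 := hne x hx
  have := hode x hx
  rw [(sl_hasDeriv hh hU x).deriv] at this
  have h2 : h x ≠ 0 := hx0
  field_simp
  apply mul_left_cancel₀ hx0
  linear_combination this

lemma deriv_comb {h U w : ℝ → ℝ} (hh : ContDiff ℝ 1 h) (hU : ContDiff ℝ 2 U)
    (hw : ContDiff ℝ 2 w) (k x : ℝ) :
    deriv (fun t => (h t) ^ 2 * deriv (fun s => U s - k * w s) t) x =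
      deriv (fun t => (h t) ^ 2 * deriv U t) x - k * deriv (fun t => (h t) ^ 2 * deriv w t) x := by
  have e : (fun t => (h t) ^ 2 * deriv (fun s => U s - k * w s) t)
      = fun t => (h t) ^ 2 * deriv U t - k * ((h t) ^ 2 * deriv w t) := by
    funext t
    have := (((c2_facts hU).1 t).hasDerivAt.fun_sub (((c2_facts hw).1 t).hasDerivAt.const_mul k)).deriv
    rw [this]; ring
  rw [e]
  have h1 := (sl_hasDeriv hh hU x)
  have h2 := (sl_hasDeriv hh hw x)
  rw [(h1.fun_sub (h2.const_mul k)).deriv, h1.deriv, h2.deriv]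

lemma edge_mult {ℓ μ : ℝ} (hℓ : 0 < ℓ) {h U w : ℝ → ℝ} (hh : ContDiff ℝ 1 h)
    (hpos : ∀ x ∈ Icc 0 ℓ, 0 < h x) (hU : ContDiff ℝ 2 U) (hw : ContDiff ℝ 2 w)
    (h0 : U ℓ = 0) (hw0 : w ℓ = 0) (hwne : w 0 ≠ 0)
    (hode : ∀ x ∈ Icc 0 ℓ, deriv (fun t => (h t) ^ 2 * deriv U t) x = -μ * (h x) ^ 2 * U x)
    (hodew : ∀ x ∈ Icc 0 ℓ, deriv (fun t => (h t) ^ 2 * deriv w t) x = -μ * (h x) ^ 2 * w x) :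
    ∃ k, ∀ x ∈ Icc 0 ℓ, U x = k * w x := by
  have hd : deriv w ℓ ≠ 0 := fun hd =>
    hwne (edge_zero hh hpos hw hw0 hd hodew 0 ⟨le_rfl, hℓ.le⟩)
  refine ⟨deriv U ℓ / deriv w ℓ, fun x hx => ?_⟩
  have := edge_zero (μ := μ) (U := fun s => U s - (deriv U ℓ / deriv w ℓ) * w s) hh hpos
    (by fun_prop) (by simp [h0, hw0]) (by
      rw [(((c2_facts hU).1 ℓ).hasDerivAt.fun_sub (((c2_facts hw).1 ℓ).hasDerivAt.const_mul _)).deriv]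
      field_simp; ring) (by
      intro x hx
      rw [deriv_comb hh hU hw, hode x hx, hodew x hx]; ring) x hx
  linarith [this]

lemma edge_green {ℓ μ ν : ℝ} (hℓ : 0 < ℓ) {h φ w Φ : ℝ → ℝ} (hh : ContDiff ℝ 1 h)
    (hφ : ContDiff ℝ 2 φ) (hw : ContDiff ℝ 2 w) (hΦ : ContinuousOn Φ (Icc 0 ℓ))
    (h0 : φ ℓ = 0) (hw0 : w ℓ = 0)
    (hode : ∀ x ∈ Icc 0 ℓ, -(deriv (fun t => (h t) ^ 2 * deriv φ t) x) - μ * (h x) ^ 2 * φ x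
      = Φ x + ν * (h x) ^ 2 * w x)
    (hodew : ∀ x ∈ Icc 0 ℓ, deriv (fun t => (h t) ^ 2 * deriv w t) x = -μ * (h x) ^ 2 * w x) :
    (h 0) ^ 2 * deriv φ 0 * w 0 - (h 0) ^ 2 * deriv w 0 * φ 0 =
      (∫ x in (0:ℝ)..ℓ, Φ x * w x) + ν * ∫ x in (0:ℝ)..ℓ, (h x) ^ 2 * w x * w x := by
  have cw := hw.continuous
  have ch := hh.continuous
  have i1 : IntervalIntegrable (fun x => Φ x * w x) MeasureTheory.volume 0 ℓ := by
    apply ContinuousOn.intervalIntegrable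
    rw [uIcc_of_le hℓ.le]
    exact hΦ.mul cw.continuousOn
  have i2 : IntervalIntegrable (fun x => ν * ((h x) ^ 2 * w x * w x)) MeasureTheory.volume 0 ℓ := by
    apply Continuous.intervalIntegrable
    fun_prop
  rw [← intervalIntegral.integral_const_mul, ← intervalIntegral.integral_add i1 i2]
  have := intervalIntegral.integral_eq_sub_of_hasDerivAt (a := 0) (b := ℓ)
    (f := fun t => (h t) ^ 2 * deriv w t * φ t - (h t) ^ 2 * deriv φ t * w t)
    (f' := fun x => Φ x * w x + ν * ((h x) ^ 2 * w x * w x)) (by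
      intro x hx
      rw [uIcc_of_le hℓ.le] at hx
      have d1 := sl_hasDeriv hh hw x
      have d2 := sl_hasDeriv hh hφ x
      have o1 := hodew x hx
      have o2 := hode x hx
      rw [d1.deriv] at o1
      rw [d2.deriv] at o2
      convert (d1.fun_mul ((c2_facts hφ).1 x).hasDerivAt).fun_sub
        (d2.fun_mul ((c2_facts hw).1 x).hasDerivAt) using 1
      linear_combination (- w x) * o2 - φ x * o1) (i1.add i2)
  rw [this, h0, hw0]
  ring

theorem limit_fredholm_exists_unique
    (ℓ : Fin 3 → ℝ) (h : Fin 3 → ℝ → ℝ)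
    (hℓ : ∀ i, 0 < ℓ i)
    (hh : ∀ i, ContDiff ℝ 1 (h i))
    (hhpos : ∀ i, ∀ x ∈ Icc 0 (ℓ i), 0 < h i x)
    (μ₀ : ℝ) (w : Fin 3 → ℝ → ℝ)
    (hw : IsLimitEigenpair ℓ h μ₀ w)
    (hw0 : w 0 0 ≠ 0)
    (Φ : Fin 3 → ℝ → ℝ) (hΦ : ∀ i, ContinuousOn (Φ i) (Icc 0 (ℓ i)))
    (D : ℝ) :
    ∃ (ν : ℝ) (φ : Fin 3 → ℝ → ℝ),
      SolvesInhom ℓ h μ₀ w Φ D ν φ ∧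
        ∀ (ν' : ℝ) (φ' : Fin 3 → ℝ → ℝ), SolvesInhom ℓ h μ₀ w Φ D ν' φ' →
          ν' = ν ∧ ∀ i, ∀ x ∈ Icc 0 (ℓ i), φ' i x = φ i x := by
  obtain ⟨wc, -, wode, wℓ, ⟨w01, w12⟩, wK⟩ := hw
  obtain ⟨ω, hω⟩ : ∃ ω, ω = w 0 0 := ⟨_, rfl⟩
  have hωne : ω ≠ 0 := hω ▸ hw0
  have hwω : ∀ i, w i 0 = ω := by
    intro i
    fin_cases i
    · exact hω.symm
    · exact (hω.trans w01).symm
    · exact (hω.trans (w01.trans w12)).symm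
  have ch : ∀ i, Continuous (h i) := fun i => (hh i).continuous
  have cw : ∀ i, Continuous (w i) := fun i => (wc i).continuous
  obtain ⟨N, hN⟩ : ∃ N : Fin 3 → ℝ, ∀ i, N i = ∫ x in (0:ℝ)..(ℓ i), (h i x) ^ 2 * w i x * w i x :=
    ⟨_, fun _ => rfl⟩
  obtain ⟨P, hP⟩ : ∃ P : Fin 3 → ℝ, ∀ i, P i = ∫ x in (0:ℝ)..(ℓ i), Φ i x * w i x :=
    ⟨_, fun _ => rfl⟩
  have hNpos : ∀ i, 0 < N i := by
    intro i
    rw [hN]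
    apply intervalIntegral.integral_pos (hℓ i)
    · have := ch i; have := cw i
      fun_prop
    · intro x hx
      rw [mul_assoc]
      exact mul_nonneg (sq_nonneg _) (mul_self_nonneg _)
    · refine ⟨0, ⟨le_rfl, (hℓ i).le⟩, ?_⟩
      have h1 := hhpos i 0 ⟨le_rfl, (hℓ i).le⟩
      have h2 : 0 < w i 0 * w i 0 := by
        rw [hwω i]; exact mul_self_pos.2 hωne
      rw [mul_assoc]
      positivity
  have hNs : 0 < ∑ i, N i := Finset.sum_pos (fun i _ => hNpos i) Finset.univ_nonempty
  -- Green identity, summed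
  have green : ∀ (ν : ℝ) (φ : Fin 3 → ℝ → ℝ) (κ : ℝ), (∀ i, ContDiff ℝ 2 (φ i)) →
      (∀ i, ∀ x ∈ Icc 0 (ℓ i),
        -(deriv (fun t => (h i t) ^ 2 * deriv (φ i) t) x) - μ₀ * (h i x) ^ 2 * φ i x
        = Φ i x + ν * (h i x) ^ 2 * w i x) →
      (∀ i, φ i (ℓ i) = 0) → (∀ i, φ i 0 = κ) →
      (∑ i, (h i 0) ^ 2 * deriv (φ i) 0) * ω = ∑ i, P i + ν * ∑ i, N i := by
    intro ν φ κ c2 ode bl b0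
    have g : ∀ i, (h i 0) ^ 2 * deriv (φ i) 0 * ω - (h i 0) ^ 2 * deriv (w i) 0 * κ =
        P i + ν * N i := by
      intro i
      rw [hP, hN, ← hwω i, ← b0 i]
      exact edge_green (hℓ i) (hh i) (c2 i) (wc i) (hΦ i) (bl i) (wℓ i) (ode i) (wode i)
    have g' := Finset.sum_congr rfl (fun i (_ : i ∈ Finset.univ) => g i)
    rw [Finset.sum_sub_distrib, Finset.sum_add_distrib, ← Finset.sum_mul, ← Finset.sum_mul,
      ← Finset.mul_sum, wK] at g'
    linarith
  obtain ⟨ν, hν⟩ : ∃ ν, ν * ∑ i, N i = D * ω - ∑ i, P i :=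
    ⟨(D * ω - ∑ i, P i) / ∑ i, N i, div_mul_cancel₀ _ hNs.ne'⟩
  have hex : ∃ φ, SolvesInhom ℓ h μ₀ w Φ D ν φ := by
    have := fun i => edge_exist (μ := μ₀) (hℓ i) (hh i) (hhpos i)
      (F := fun x => Φ i x + ν * (h i x) ^ 2 * w i x) (by
        have := ch i; have := cw i
        exact (hΦ i).add (by fun_prop))
    choose ψ ψc ψℓ ψode using this
    obtain ⟨Q, hQ⟩ : ∃ Q : Fin 3 → ℝ, ∀ i, Q i = ∫ x in (0:ℝ)..(ℓ i), (h i x) ^ 2 * ψ i x * w i x :=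
      ⟨_, fun _ => rfl⟩
    obtain ⟨s, hs⟩ : ∃ s, s * ∑ i, N i = ∑ i, (Q i - ψ i 0 / ω * N i) :=
      ⟨(∑ i, (Q i - ψ i 0 / ω * N i)) / ∑ i, N i, div_mul_cancel₀ _ hNs.ne'⟩
    set φ : Fin 3 → ℝ → ℝ := fun i x => ψ i x - (ψ i 0 / ω + s) * w i x with hφ
    have φc : ∀ i, ContDiff ℝ 2 (φ i) := fun i => by
      have := ψc i; have := wc i
      simp only [hφ]; fun_prop
    have φode : ∀ i, ∀ x ∈ Icc 0 (ℓ i),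
        -(deriv (fun t => (h i t) ^ 2 * deriv (φ i) t) x) - μ₀ * (h i x) ^ 2 * φ i x
        = Φ i x + ν * (h i x) ^ 2 * w i x := by
      intro i x hx
      simp only [hφ]
      rw [deriv_comb (hh i) (ψc i) (wc i), wode i x hx, ← ψode i x hx]
      ring
    have φℓ : ∀ i, φ i (ℓ i) = 0 := fun i => by simp [hφ, ψℓ, wℓ]
    have φ0 : ∀ i, φ i 0 = - s * ω := fun i => by
      simp only [hφ, hwω]
      field_simp
      ring
    refine ⟨φ, φc, φode, φℓ, ⟨by rw [φ0, φ0], by rw [φ0, φ0]⟩, ?_, ?_⟩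
    · have := green ν φ _ φc φode φℓ φ0
      rw [hν] at this
      apply mul_right_cancel₀ hωne
      linarith
    · have : ∀ i, (∫ x in (0:ℝ)..(ℓ i), (h i x) ^ 2 * φ i x * w i x) =
          (Q i - ψ i 0 / ω * N i) - s * N i := by
        intro i
        have c1 := ch i
        have c2 := cw i
        have c3 := (ψc i).continuous
        have e : (fun x => (h i x) ^ 2 * φ i x * w i x) = fun x => (h i x) ^ 2 * ψ i x * w i x
            - (ψ i 0 / ω + s) * ((h i x) ^ 2 * w i x * w i x) := by
          funext x; simp only [hφ]; ring
        rw [e, intervalIntegral.integral_sub (Continuous.intervalIntegrable (by fun_prop) _ _)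
          (Continuous.intervalIntegrable (by fun_prop) _ _), intervalIntegral.integral_const_mul,
          ← hQ, ← hN]
        ring
      rw [Finset.sum_congr rfl (fun i _ => this i), Finset.sum_sub_distrib, ← Finset.mul_sum, hs]
      ring
  obtain ⟨φ, hφ⟩ := hex
  refine ⟨ν, φ, hφ, ?_⟩
  intro ν' φ' hφ'
  obtain ⟨φc, φode, φℓ, ⟨φ01, φ12⟩, φK, φo⟩ := hφ
  obtain ⟨φc', φode', φℓ', ⟨φ01', φ12'⟩, φK', φo'⟩ := hφ'
  have b0 : ∀ i, φ i 0 = φ 0 0 := by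
    intro i
    fin_cases i
    · rfl
    · exact φ01.symm
    · exact (φ01.trans φ12).symm
  have b0' : ∀ i, φ' i 0 = φ' 0 0 := by
    intro i
    fin_cases i
    · rfl
    · exact φ01'.symm
    · exact (φ01'.trans φ12').symm
  have hνν : ν' = ν := by
    have := green ν' φ' _ φc' φode' φℓ' b0'
    rw [φK'] at this
    apply mul_right_cancel₀ hNs.ne'
    linarith
  subst hνν
  refine ⟨rfl, ?_⟩
  have hk : ∀ i, ∃ k, ∀ x ∈ Icc 0 (ℓ i), φ' i x - 1 * φ i x = k * w i x := by
    intro i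
    have f1 := φc i
    have f2 := φc' i
    refine edge_mult (μ := μ₀) (U := fun x => φ' i x - 1 * φ i x) (hℓ i) (hh i) (hhpos i)
      (by fun_prop) (wc i) (by simp [φℓ, φℓ']) (wℓ i) (by rw [hwω]; exact hωne) ?_ (wode i)
    intro x hx
    rw [deriv_comb (hh i) f2 f1]
    linear_combination (-1) * φode' i x hx + φode i x hx
  choose k hk using hk
  have hkk : ∀ i, k i = (φ' 0 0 - φ 0 0) / ω := by
    intro i
    have := hk i 0 ⟨le_rfl, (hℓ i).le⟩
    rw [b0, b0', hwω] at this
    rw [eq_div_iff hωne]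
    linarith
  set K := (φ' 0 0 - φ 0 0) / ω with hK
  have hsum : ∀ i, (∫ x in (0:ℝ)..(ℓ i), (h i x) ^ 2 * φ' i x * w i x) =
      (∫ x in (0:ℝ)..(ℓ i), (h i x) ^ 2 * φ i x * w i x) + K * N i := by
    intro i
    have c1 := ch i
    have c2 := cw i
    have c3 := (φc i).continuous
    rw [hN, ← intervalIntegral.integral_const_mul, ← intervalIntegral.integral_add
      (Continuous.intervalIntegrable (by fun_prop) _ _)
      (Continuous.intervalIntegrable (by fun_prop) _ _)]
    apply intervalIntegral.integral_congr
    intro x hx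
    rw [uIcc_of_le (hℓ i).le] at hx
    have := hk i x hx
    rw [hkk] at this
    simp only
    linear_combination (h i x) ^ 2 * w i x * this
  rw [Finset.sum_congr rfl (fun i _ => hsum i), Finset.sum_add_distrib, φo, ← Finset.mul_sum,
    zero_add] at φo'
  have hK0 : K = 0 := (mul_eq_zero.1 φo').resolve_right hNs.ne'
  intro i x hx
  have := hk i x hx
  rw [hkk, hK0] at this
  linarith
end

section
/- Let (μ, (w₁, w₂, w₃)) and (μ, (v₁, v₂, v₃)) be eigenpairs of the α = 1 limit spectral problem on the star graph with the same eigenvalue μ, and suppose w₁(0) ≠ 0. Then there exists c ∈ ℝ such that v_i(x) = c · w_i(x) for all x ∈ [0, ℓ_i] and i = 1,2,3. In particular, every eigenvalue possessing an eigenfunction that does not vanish at the vertex is simple. -/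
open Set

/-- An eigenpair `(μ, (w₁, w₂, w₃))` of the `α = 1` limit spectral problem on the
star graph with constant thicknesses `h i` and concentrated mass `κ` at the vertex. -/
def IsAlphaOneEigenpair (ℓ h : Fin 3 → ℝ) (κ μ : ℝ) (w : Fin 3 → ℝ → ℝ) : Prop :=
  (∀ i, ContDiff ℝ 2 (w i)) ∧
  (∃ i, ∃ x ∈ Icc 0 (ℓ i), w i x ≠ 0) ∧
  (∀ i, ∀ x ∈ Icc 0 (ℓ i), deriv (deriv (w i)) x = -μ * w i x) ∧
  (∀ i, w i (ℓ i) = 0) ∧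
  (w 0 0 = w 1 0 ∧ w 1 0 = w 2 0) ∧
  (∑ i, (h i) ^ 2 * deriv (w i) 0 = -κ * μ * w 0 0)

lemma aux_derivs (f : ℝ → ℝ) (hf : ContDiff ℝ 2 f) :
    (∀ x, HasDerivAt f (deriv f x) x) ∧
      (∀ x, HasDerivAt (deriv f) (deriv (deriv f) x) x) := by
  have h1 : ContDiff ℝ 1 (deriv f) := by
    have h2 : ContDiff ℝ (1 + 1) f := by
      have h3 : (1 + 1 : WithTop ℕ∞) = 2 := by norm_num
      rw [h3]; exact hf
    exact (contDiff_succ_iff_deriv.1 h2).2.2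
  exact ⟨fun x => ((hf.differentiable (by norm_num)) x).hasDerivAt,
    fun x => ((h1.differentiable (by norm_num)) x).hasDerivAt⟩

lemma aux_unique (L μ : ℝ) (z z' z'' : ℝ → ℝ)
    (h1 : ∀ x, HasDerivAt z (z' x) x) (h2 : ∀ x, HasDerivAt z' (z'' x) x)
    (ho : ∀ x ∈ Icc 0 L, z'' x = -μ * z x) (h0 : z 0 = 0) (h0' : z' 0 = 0) :
    ∀ x ∈ Icc 0 L, z x = 0 := by
  have hE : ∀ x, HasDerivAt (fun x => z x ^ 2 + z' x ^ 2)
      (2 * z x * z' x + 2 * z' x * z'' x) x := by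
    intro x
    refine HasDerivAt.congr_deriv (((h1 x).pow 2).add ((h2 x).pow 2)) ?_
    norm_num
  have key := eq_zero_of_abs_deriv_le_mul_abs_self_of_eq_zero_right
    (f := fun x => z x ^ 2 + z' x ^ 2) (f' := fun x => 2 * z x * z' x + 2 * z' x * z'' x)
    (K := |1 - μ|) (a := 0) (b := L)
    (fun x _ => (hE x).continuousAt.continuousWithinAt)
    (fun x _ => (hE x).hasDerivWithinAt) (by simp [h0, h0'])
    (by
      intro x hx
      have e : 2 * z x * z' x + 2 * z' x * z'' x = (1 - μ) * (2 * z x * z' x) := by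
        rw [ho x ⟨hx.1, hx.2.le⟩]; ring
      simp only [Real.norm_eq_abs]
      rw [e, abs_mul]
      apply mul_le_mul_of_nonneg_left _ (abs_nonneg _)
      rw [abs_of_nonneg (by positivity : 0 ≤ z x ^ 2 + z' x ^ 2), abs_le]
      constructor <;> nlinarith [sq_nonneg (z x + z' x), sq_nonneg (z x - z' x)])
  intro x hx
  have := key x hx
  nlinarith [sq_nonneg (z x), sq_nonneg (z' x)]

lemma aux_edge (L μ : ℝ) (hL : 0 < L) (w v : ℝ → ℝ) (hw : ContDiff ℝ 2 w)
    (hv : ContDiff ℝ 2 v)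
    (ow : ∀ x ∈ Icc 0 L, deriv (deriv w) x = -μ * w x)
    (ov : ∀ x ∈ Icc 0 L, deriv (deriv v) x = -μ * v x)
    (ew : w L = 0) (ev : v L = 0) (h0 : w 0 ≠ 0) :
    ∀ x ∈ Icc 0 L, v x = v 0 / w 0 * w x := by
  obtain ⟨w1, w2⟩ := aux_derivs w hw
  obtain ⟨v1, v2⟩ := aux_derivs v hv
  have hW : ∀ x, HasDerivAt (fun x => v x * deriv w x - deriv v x * w x) _ x :=
    fun x => ((v1 x).mul (w2 x)).sub ((v2 x).mul (w1 x))
  have hc := constant_of_has_deriv_right_zero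
    (f := fun x => v x * deriv w x - deriv v x * w x) (a := 0) (b := L)
    (fun x _ => (hW x).continuousAt.continuousWithinAt)
    (fun x hx => by
      convert (hW x).hasDerivWithinAt using 1
      rw [ow x ⟨hx.1, hx.2.le⟩, ov x ⟨hx.1, hx.2.le⟩]; ring)
    L ⟨hL.le, le_rfl⟩
  simp only [ew, ev] at hc
  intro x hx
  have := aux_unique L μ (fun x => v x - v 0 / w 0 * w x)
    (fun x => deriv v x - v 0 / w 0 * deriv w x)
    (fun x => deriv (deriv v) x - v 0 / w 0 * deriv (deriv w) x)
    (fun x => (v1 x).sub ((w1 x).const_mul _))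
    (fun x => (v2 x).sub ((w2 x).const_mul _))
    (fun x hx => by simp only [ow x hx, ov x hx]; ring)
    (by field_simp; ring)
    (by field_simp; linarith) x hx
  linarith

/-- Every eigenvalue of the `α = 1` limit spectral problem possessing an
eigenfunction not vanishing at the vertex is simple. -/
theorem alphaOne_eigenvalue_simple
    (ℓ h : Fin 3 → ℝ) (κ : ℝ)
    (hℓ : ∀ i, 0 < ℓ i) (hh : ∀ i, 0 < h i) (hκ : 0 < κ)
    (μ : ℝ) (w v : Fin 3 → ℝ → ℝ)
    (hw : IsAlphaOneEigenpair ℓ h κ μ w)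
    (hv : IsAlphaOneEigenpair ℓ h κ μ v)
    (hw0 : w 0 0 ≠ 0) :
    ∃ c : ℝ, ∀ i, ∀ x ∈ Icc 0 (ℓ i), v i x = c * w i x := by
  obtain ⟨cw, -, ow, ew, ⟨w01, w12⟩, -⟩ := hw
  obtain ⟨cv, -, ov, ev, ⟨v01, v12⟩, -⟩ := hv
  have hwi : ∀ i, w i 0 = w 0 0 := by
    intro i; fin_cases i <;> simp [w01, w12]
  have hvi : ∀ i, v i 0 = v 0 0 := by
    intro i; fin_cases i <;> simp [v01, v12]
  refine ⟨v 0 0 / w 0 0, fun i x hx => ?_⟩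
  have := aux_edge (ℓ i) μ (hℓ i) (w i) (v i) (cw i) (cv i) (ow i) (ov i) (ew i) (ev i)
    (by rw [hwi i]; exact hw0) x hx
  rwa [hwi i, hvi i] at this
end

section
/- Let (μ₀, (w₁, w₂, w₃)) be an eigenpair of the α = 1 limit spectral problem on the star graph. Let Φ_i : [0, ℓ_i] → ℝ be continuous (i = 1,2,3) and D, ν ∈ ℝ. Suppose φ_i : [0, ℓ_i] → ℝ are twice continuously differentiable and satisfy: −h_i² φ_i″(x) − μ₀ h_i² φ_i(x) = Φ_i(x) + ν h_i² w_i(x) on [0, ℓ_i]; φ_i(ℓ_i) = 0; φ₁(0) = φ₂(0) = φ₃(0); and Σ_{i=1}^{3} h_i² φ_i′(0) = D − κ μ₀ φ₁(0) − κ ν w₁(0). Then Σ_{i=1}^{3} ∫₀^{ℓ_i} Φ_i(x) w_i(x) dx − D · w₁(0) + ν ( Σ_{i=1}^{3} h_i² ∫₀^{ℓ_i} w_i(x)² dx + κ w₁(0)² ) = 0. -/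
open Set

/-- Fredholm compatibility condition for the inhomogeneous problem associated with
the `α = 1` limit spectral problem, where both the differential equations and the
vertex condition carry the spectral parameter. -/
theorem alphaOne_fredholm_compatibility
    (ℓ h : Fin 3 → ℝ) (κ : ℝ)
    (hℓ : ∀ i, 0 < ℓ i) (hh : ∀ i, 0 < h i) (hκ : 0 < κ)
    (μ₀ : ℝ) (w : Fin 3 → ℝ → ℝ)
    (hw : IsAlphaOneEigenpair ℓ h κ μ₀ w)
    (Φ : Fin 3 → ℝ → ℝ) (hΦ : ∀ i, ContinuousOn (Φ i) (Icc 0 (ℓ i)))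
    (D ν : ℝ) (φ : Fin 3 → ℝ → ℝ)
    (hφreg : ∀ i, ContDiff ℝ 2 (φ i))
    (hode : ∀ i, ∀ x ∈ Icc 0 (ℓ i),
      -((h i) ^ 2 * deriv (deriv (φ i)) x) - μ₀ * (h i) ^ 2 * φ i x
        = Φ i x + ν * (h i) ^ 2 * w i x)
    (hbc : ∀ i, φ i (ℓ i) = 0)
    (hvertex : φ 0 0 = φ 1 0 ∧ φ 1 0 = φ 2 0)
    (hkirchhoff : ∑ i, (h i) ^ 2 * deriv (φ i) 0
      = D - κ * μ₀ * φ 0 0 - κ * ν * w 0 0) :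
    (∑ i, ∫ x in (0 : ℝ)..(ℓ i), Φ i x * w i x) - D * w 0 0
      + ν * ((∑ i, (h i) ^ 2 * ∫ x in (0 : ℝ)..(ℓ i), (w i x) ^ 2)
        + κ * (w 0 0) ^ 2) = 0 := by
  obtain ⟨hwreg, -, hwode, hwbc, ⟨hw01, hw12⟩, hwk⟩ := hw
  obtain ⟨hv01, hv12⟩ := hvertex
  have key : ∀ i, (∫ x in (0 : ℝ)..(ℓ i), Φ i x * w i x)
      + ν * ((h i) ^ 2 * ∫ x in (0 : ℝ)..(ℓ i), (w i x) ^ 2)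
      = (h i) ^ 2 * (deriv (φ i) 0 * w i 0 - φ i 0 * deriv (w i) 0) := by
    intro i
    have hu : uIcc 0 (ℓ i) = Icc 0 (ℓ i) := uIcc_of_le (hℓ i).le
    have hwc : Continuous (w i) := (hwreg i).continuous
    have hd : ∀ f : ℝ → ℝ, ContDiff ℝ 2 f →
        ∀ x, HasDerivAt f (deriv f x) x ∧ HasDerivAt (deriv f) (deriv (deriv f) x) x := by
      intro f hf x
      have h1 : ContDiff ℝ 1 (deriv f) :=
        ((contDiff_succ_iff_deriv (n := 1)).1 (by simpa [one_add_one_eq_two] using hf)).2.2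
      exact ⟨(hf.differentiable (by norm_num) x).hasDerivAt,
        (h1.differentiable (by norm_num) x).hasDerivAt⟩
    have hI1 : IntervalIntegrable (fun x => Φ i x * w i x) MeasureTheory.volume 0 (ℓ i) := by
      apply ContinuousOn.intervalIntegrable
      rw [hu]
      exact (hΦ i).mul hwc.continuousOn
    have hI2 : IntervalIntegrable (fun x => (ν * (h i) ^ 2) * (w i x) ^ 2)
        MeasureTheory.volume 0 (ℓ i) :=
      (by fun_prop : Continuous _).intervalIntegrable _ _
    have hF : ∫ x in (0 : ℝ)..(ℓ i), (Φ i x * w i x + (ν * (h i) ^ 2) * (w i x) ^ 2)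
        = (h i) ^ 2 * (φ i (ℓ i) * deriv (w i) (ℓ i) - deriv (φ i) (ℓ i) * w i (ℓ i))
          - (h i) ^ 2 * (φ i 0 * deriv (w i) 0 - deriv (φ i) 0 * w i 0) := by
      refine intervalIntegral.integral_eq_sub_of_hasDerivAt
        (f := fun x => (h i) ^ 2 * (φ i x * deriv (w i) x - deriv (φ i) x * w i x))
        ?_ (hI1.add hI2)
      intro x hx
      rw [hu] at hx
      obtain ⟨a1, a2⟩ := hd _ (hφreg i) x
      obtain ⟨b1, b2⟩ := hd _ (hwreg i) x
      have := ((a1.mul b2).sub (a2.mul b1)).const_mul ((h i) ^ 2)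
      refine this.congr_deriv ?_
      have e1 := hode i x hx
      have e2 := hwode i x hx
      rw [e2]
      linear_combination (w i x) * e1
    rw [intervalIntegral.integral_add hI1 hI2, intervalIntegral.integral_const_mul,
      hbc i, hwbc i] at hF
    linear_combination hF
  have k0 := key 0
  have k1 := key 1
  have k2 := key 2
  simp only [Fin.sum_univ_three] at hwk hkirchhoff ⊢
  rw [← hw12, ← hw01, ← hv12, ← hv01] at k2
  rw [← hw01, ← hv01] at k1
  linear_combination k0 + k1 + k2 + w 0 0 * hkirchhoff - φ 0 0 * hwk
end

section
/- For i = 1,2,3 let ℓ_i > 0 and h_i > 0 be constants, and let (μ₀, (w₁, w₂, w₃)) be an eigenpair of the constant-coefficient limit spectral problem on the star graph, normalized by Σ_{i=1}^{3} h_i² ∫₀^{ℓ_i} (w_i′(x))² dx = 1. Let κ ≥ 0, and suppose ν ∈ ℝ and twice continuously differentiable functions v_i : [0, ℓ_i] → ℝ satisfy: −v_i″(x) − μ₀ v_i(x) = ν w_i(x) on [0, ℓ_i]; v_i(ℓ_i) = 0; v₁(0) = v₂(0) = v₃(0); and Σ_{i=1}^{3} h_i² v_i′(0) = −κ μ₀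 w₁(0). Then ν = −κ (μ₀ w₁(0))². -/
open Set

/-- An eigenpair `(μ, (w₁, w₂, w₃))` of the constant-coefficient limit spectral
problem on the star graph: `w_i″ = -μ w_i` on `[0, ℓ i]`, `w i (ℓ i) = 0`, the
values at the vertex agree, and the Kirchhoff condition `∑ h_i² w_i′(0) = 0`
holds. -/
def IsConstEigenpair (ℓ h : Fin 3 → ℝ) (μ : ℝ) (w : Fin 3 → ℝ → ℝ) : Prop :=
  (∀ i, ContDiff ℝ 2 (w i)) ∧
  (∃ i, ∃ x ∈ Icc 0 (ℓ i), w i x ≠ 0) ∧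
  (∀ i, ∀ x ∈ Icc 0 (ℓ i), deriv (deriv (w i)) x = -μ * w i x) ∧
  (∀ i, w i (ℓ i) = 0) ∧
  (w 0 0 = w 1 0 ∧ w 1 0 = w 2 0) ∧
  (∑ i, (h i) ^ 2 * deriv (w i) 0 = 0)

theorem edge_identities (l μ ν : ℝ) (hl : 0 < l) (w v : ℝ → ℝ)
    (hw : ContDiff ℝ 2 w) (hv : ContDiff ℝ 2 v)
    (hw2 : ∀ x ∈ Icc 0 l, deriv (deriv w) x = -μ * w x)
    (hv2 : ∀ x ∈ Icc 0 l, -(deriv (deriv v) x) - μ * v x = ν * w x)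
    (hwl : w l = 0) (hvl : v l = 0) :
    (∫ x in (0 : ℝ)..l, (deriv w x) ^ 2) = - (w 0 * deriv w 0) + μ * ∫ x in (0 : ℝ)..l, (w x) ^ 2 ∧
    ν * (∫ x in (0 : ℝ)..l, (w x) ^ 2) = deriv v 0 * w 0 - v 0 * deriv w 0 := by
  have key : ∀ f : ℝ → ℝ, ContDiff ℝ 2 f → (∀ x, HasDerivAt f (deriv f x) x) ∧
      (∀ x, HasDerivAt (deriv f) (deriv (deriv f) x) x) ∧ Continuous f ∧ Continuous (deriv f) := by
    intro f hf
    have h1 : ContDiff ℝ 1 (deriv f) := by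
      have := (contDiff_succ_iff_deriv (n := 1) (f := f) (𝕜 := ℝ)).1 (by simpa [one_add_one_eq_two] using hf)
      exact this.2.2
    exact ⟨fun x => (hf.differentiable (by norm_num) x).hasDerivAt,
      fun x => (h1.differentiable (by norm_num) x).hasDerivAt, hf.continuous, h1.continuous⟩
  obtain ⟨w1, w2, cw, cw'⟩ := key w hw
  obtain ⟨v1, v2, cv, cv'⟩ := key v hv
  have iw : IntervalIntegrable (fun x => (w x) ^ 2) MeasureTheory.volume 0 l :=
    (cw.pow 2).intervalIntegrable _ _
  have iw' : IntervalIntegrable (fun x => (deriv w x) ^ 2) MeasureTheory.volume 0 l :=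
    (cw'.pow 2).intervalIntegrable _ _
  constructor
  · have H := intervalIntegral.integral_eq_sub_of_hasDerivAt (a := 0) (b := l)
      (f := fun x => w x * deriv w x) (f' := fun x => (deriv w x) ^ 2 - μ * (w x) ^ 2)
      (fun x hx => by
        rw [uIcc_of_le hl.le] at hx
        refine HasDerivAt.congr_deriv ((w1 x).mul (w2 x)) ?_
        rw [hw2 x hx]; ring) (iw'.sub (iw.const_mul μ))
    rw [intervalIntegral.integral_sub iw' (iw.const_mul μ),
      intervalIntegral.integral_const_mul] at H
    simp only [hwl] at H
    linarith
  · have H := intervalIntegral.integral_eq_sub_of_hasDerivAt (a := 0) (b := l)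
      (f := fun x => v x * deriv w x - deriv v x * w x) (f' := fun x => ν * (w x) ^ 2)
      (fun x hx => by
        rw [uIcc_of_le hl.le] at hx
        refine HasDerivAt.congr_deriv (((v1 x).mul (w2 x)).sub ((v2 x).mul (w1 x))) ?_
        rw [hw2 x hx]
        linear_combination (w x) * hv2 x hx) (iw.const_mul ν)
    rw [intervalIntegral.integral_const_mul] at H
    simp only [hwl, hvl] at H
    linarith

/-- Derivation of the second term of the eigenvalue asymptotics for `0 < α < 1`:
if `(ν, (v₁, v₂, v₃))` solves the corrector problem with concentrated mass `κ` at
the normalized eigenpair `(μ₀, w)` of the constant-coefficient limit problem, then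
`ν = -κ (μ₀ w₁(0))²`. -/
theorem corrector_eigenvalue_formula
    (ℓ h : Fin 3 → ℝ)
    (hℓ : ∀ i, 0 < ℓ i) (hh : ∀ i, 0 < h i)
    (μ₀ : ℝ) (w : Fin 3 → ℝ → ℝ)
    (hw : IsConstEigenpair ℓ h μ₀ w)
    (hnorm : ∑ i, (h i) ^ 2 * ∫ x in (0 : ℝ)..(ℓ i), (deriv (w i) x) ^ 2 = 1)
    (κ : ℝ) (hκ : 0 ≤ κ)
    (ν : ℝ) (v : Fin 3 → ℝ → ℝ)
    (hvreg : ∀ i, ContDiff ℝ 2 (v i))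
    (hode : ∀ i, ∀ x ∈ Icc 0 (ℓ i),
      -(deriv (deriv (v i)) x) - μ₀ * v i x = ν * w i x)
    (hbc : ∀ i, v i (ℓ i) = 0)
    (hvertex : v 0 0 = v 1 0 ∧ v 1 0 = v 2 0)
    (hkirchhoff : ∑ i, (h i) ^ 2 * deriv (v i) 0 = -κ * μ₀ * w 0 0) :
    ν = -κ * (μ₀ * w 0 0) ^ 2 := by
  obtain ⟨hwreg, -, hw2, hwl, ⟨hw01, hw12⟩, hwk⟩ := hw
  obtain ⟨hv01, hv12⟩ := hvertex
  have E := fun i => edge_identities (ℓ i) μ₀ ν (hℓ i) (w i) (v i) (hwreg i) (hvreg i)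
    (hw2 i) (hode i) (hwl i) (hbc i)
  have a0 := (E 0).1
  have a1 := (E 1).1
  have a2 := (E 2).1
  have b0 := (E 0).2
  have b1 := (E 1).2
  have b2 := (E 2).2
  simp only [Fin.sum_univ_three] at hnorm hwk hkirchhoff
  rw [a0, a1, a2] at hnorm
  rw [← hw12, ← hw01] at hnorm b2
  rw [← hw01] at b1
  rw [← hv12, ← hv01] at b2
  rw [← hv01] at b1
  generalize (∫ x in (0 : ℝ)..(ℓ 0), (w 0 x) ^ 2) = I0 at *
  generalize (∫ x in (0 : ℝ)..(ℓ 1), (w 1 x) ^ 2) = I1 at *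
  generalize (∫ x in (0 : ℝ)..(ℓ 2), (w 2 x) ^ 2) = I2 at *
  have hN : μ₀ * (h 0 ^ 2 * I0 + h 1 ^ 2 * I1 + h 2 ^ 2 * I2) = 1 := by
    linear_combination hnorm + w 0 0 * hwk
  have hM : ν * (h 0 ^ 2 * I0 + h 1 ^ 2 * I1 + h 2 ^ 2 * I2) = -κ * μ₀ * (w 0 0) ^ 2 := by
    linear_combination h 0 ^ 2 * b0 + h 1 ^ 2 * b1 + h 2 ^ 2 * b2 + w 0 0 * hkirchhoff
      - v 0 0 * hwk
  linear_combination (-ν) * hN + μ₀ * hM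
end

section
/- Let K ≥ 2 be an integer, ℓ > 0, μ₀, μ₁, …, μ_K real numbers, and w₀, w₁, …, w_K : ℝ → ℝ infinitely differentiable functions satisfying, for every k = 0, 1, …, K, the identity −w_k″(x) = Σ_{m=0}^{k} μ_m w_{k−m}(x) for all x. For 0 ≤ k ≤ K define Ψ_k(ξ) = Σ_{j=1}^{k} (ξ^j / j!) · w_{k−j}^{(j)}(0) (so Ψ₀ ≡ 0) and G_k(ξ) = w_k(0) + Ψ_k(ξ). Then for every k with 2 ≤ k ≤ K and every ξ ∈ ℝ: Ψ_k″(ξ) = −Σ_{m=0}^{k−2} μ_m G_{k−2−m}(ξ). -/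
/-- The Taylor polynomial `Ψ_k(ξ) = ∑_{j=1}^{k} (ξ^j / j!) w_{k-j}^{(j)}(0)`
prescribing the polynomial growth at infinity of the inner (node) asymptotic
terms. -/
noncomputable def PsiFun (w : ℕ → ℝ → ℝ) (k : ℕ) (ξ : ℝ) : ℝ :=
  ∑ j ∈ Finset.Icc 1 k, ξ ^ j / (Nat.factorial j : ℝ) * iteratedDeriv j (w (k - j)) 0

/-- `G_k(ξ) = w_k(0) + Ψ_k(ξ)`. -/
noncomputable def GFun (w : ℕ → ℝ → ℝ) (k : ℕ) (ξ : ℝ) : ℝ :=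
  w k 0 + PsiFun w k ξ

theorem psi_aux_deriv (n : ℕ) (c : ℕ → ℝ) :
    deriv (fun ξ : ℝ => ∑ i ∈ Finset.range n, ξ ^ (i + 1) / (Nat.factorial (i + 1) : ℝ) * c i)
      = fun ξ : ℝ => ∑ i ∈ Finset.range n, ξ ^ i / (Nat.factorial i : ℝ) * c i := by
  funext ξ
  apply HasDerivAt.deriv
  apply HasDerivAt.fun_sum
  intro i _
  have h := ((hasDerivAt_pow (i + 1) ξ).div_const (Nat.factorial (i + 1) : ℝ)).mul_const (c i)
  refine h.congr_deriv ?_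
  have h1 : (Nat.factorial i : ℝ) ≠ 0 := by positivity
  have h2 : ((i : ℝ) + 1) ≠ 0 := by positivity
  rw [Nat.factorial_succ]
  push_cast
  field_simp

theorem psi_aux_eq (w : ℕ → ℝ → ℝ) (k : ℕ) (ξ : ℝ) :
    PsiFun w k ξ = ∑ i ∈ Finset.range k,
      ξ ^ (i + 1) / (Nat.factorial (i + 1) : ℝ) * iteratedDeriv (i + 1) (w (k - (i + 1))) 0 := by
  unfold PsiFun
  rw [Finset.range_eq_Ico, Finset.sum_Ico_add' (fun j => ξ ^ j / (Nat.factorial j : ℝ) *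
    iteratedDeriv j (w (k - j)) 0) 0 k 1]
  rfl

theorem gfun_aux_eq (w : ℕ → ℝ → ℝ) (k : ℕ) (ξ : ℝ) :
    GFun w k ξ = ∑ i ∈ Finset.range (k + 1),
      ξ ^ i / (Nat.factorial i : ℝ) * iteratedDeriv i (w (k - i)) 0 := by
  rw [Finset.sum_range_succ', GFun, psi_aux_eq]
  simp [add_comm]

/-- Identity (3.39) of the paper: the Taylor polynomials `Ψ_k` of the regular
asymptotic terms satisfy `Ψ_k″(ξ) = -∑_{m=0}^{k-2} μ_m G_{k-2-m}(ξ)` whenever the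
regular terms satisfy `-w_k″ = ∑_{m=0}^{k} μ_m w_{k-m}`. -/
theorem psi_second_derivative_identity
    (K : ℕ) (hK : 2 ≤ K) (ℓ : ℝ) (hℓ : 0 < ℓ)
    (μ : ℕ → ℝ) (w : ℕ → ℝ → ℝ)
    (hw : ∀ k ≤ K, ContDiff ℝ (⊤ : ℕ∞) (w k))
    (hode : ∀ k ≤ K, ∀ x : ℝ,
      -(deriv (deriv (w k)) x) = ∑ m ∈ Finset.range (k + 1), μ m * w (k - m) x) :
    ∀ k, 2 ≤ k → k ≤ K → ∀ ξ : ℝ,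
      deriv (deriv (PsiFun w k)) ξ
        = -∑ m ∈ Finset.range (k - 1), μ m * GFun w (k - 2 - m) ξ := by
  intro k hk2 hkK ξ
  obtain ⟨n, rfl⟩ : ∃ n, k = n + 2 := ⟨k - 2, by omega⟩
  have hP : PsiFun w (n + 2) = fun ξ => ∑ i ∈ Finset.range (n + 2),
      ξ ^ (i + 1) / (Nat.factorial (i + 1) : ℝ) *
        iteratedDeriv (i + 1) (w (n + 2 - (i + 1))) 0 :=
    funext (psi_aux_eq w (n + 2))
  have hD : ∀ p ≤ K, ∀ i : ℕ, iteratedDeriv (i + 2) (w p) 0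
      = -∑ m ∈ Finset.range (p + 1), μ m * iteratedDeriv i (w (p - m)) 0 := by
    intro p hp i
    have h1 : deriv (deriv (w p)) = fun x => -∑ m ∈ Finset.range (p + 1), μ m * w (p - m) x := by
      funext x
      rw [← hode p hp x, neg_neg]
    have hc : ∀ m, ContDiffAt ℝ i (w (p - m)) 0 := fun m =>
      ((hw (p - m) (by omega)).of_le (by exact_mod_cast le_top)).contDiffAt
    rw [iteratedDeriv_succ', iteratedDeriv_succ', h1, iteratedDeriv_fun_neg,
      iteratedDeriv_fun_sum (fun m _ => contDiffAt_const.mul (hc m))]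
    congr 1
    apply Finset.sum_congr rfl
    intro m _
    rw [iteratedDeriv_const_mul_field]
  rw [hP, psi_aux_deriv (n + 2) (fun i => iteratedDeriv (i + 1) (w (n + 2 - (i + 1))) 0)]
  simp only [Finset.sum_range_succ' _ (n + 1)]
  simp only [pow_zero]
  rw [deriv_add_const]
  rw [psi_aux_deriv (n + 1) (fun i => iteratedDeriv (i + 1 + 1) (w (n + 2 - (i + 1 + 1))) 0)]
  have e : n + 2 - 1 = n + 1 := by omega
  rw [e]
  simp only [gfun_aux_eq, Nat.add_sub_cancel, Finset.mul_sum]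
  rw [Finset.sum_comm' (t' := Finset.range (n + 1)) (s' := fun i => Finset.range (n - i + 1))
    (by intro x y; simp only [Finset.mem_range]; omega), ← Finset.sum_neg_distrib]
  apply Finset.sum_congr rfl
  intro i hi
  have e2 : n + 2 - (i + 1 + 1) = n - i := by omega
  rw [e2, hD (n - i) (by omega) i, mul_neg, Finset.mul_sum]
  congr 1
  apply Finset.sum_congr rfl
  intro m _
  rw [Nat.sub_right_comm n i m]
  ring
end
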